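/- arXiv:2605.15234 — 6 statements merged into one kernel-verified Lean document; each statement's English description precedes it below -/
import Mathlib

section
/- The map 𝒮 sends positive semidefinite matrices to positive semidefinite matrices; moreover, its spectral radius ρ (the largest modulus of an eigenvalue of 𝒮 regarded as a ℂ-linear endomorphism of M_N) is itself an eigenvalue of 𝒮 admitting a nonzero positive semidefinite eigenmatrix: there exists Q ⪰ 0 with Q ≠ 0 such that 𝒮[Q] = ρ·Q. -/
open Matrix ComplexOrder ENNReal

noncomputable section

abbrev Mat (N : ℕ) := Matrix (Fin N) (Fin N) ℂ

/-- Real quadratic form `v* A v` (real part). -/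
def qf {N : ℕ} (A : Mat N) (v : Fin N → ℂ) : ℝ := (star v ⬝ᵥ A *ᵥ v).re

/-- The congruence map `Q ↦ Lᴴ Q L`. -/
def conjBy {N : ℕ} (L : Mat N) : Mat N →ₗ[ℂ] Mat N where
  toFun Q := Lᴴ * Q * L
  map_add' Q Q' := by simp [Matrix.mul_add, Matrix.add_mul]
  map_smul' a Q := by simp [Matrix.mul_smul, Matrix.smul_mul]

/-- The operator `𝒮[Q] = 𝒱[(L⁻¹)ᴴ Q L⁻¹]`. -/
def Smap {N : ℕ} (L : Mat N) (V : Mat N →ₗ[ℂ] Mat N) : Module.End ℂ (Mat N) :=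
  V ∘ₗ conjBy L⁻¹

/-- `P := sup_{Q ≻ 0} inf_{v ≠ 0} (v* L* Q L v)/(v* 𝒱[Q] v)`, valued in `[0,∞]`,
with the convention that a ratio with zero denominator and positive numerator is `∞`. -/
def Pval {N : ℕ} (L : Mat N) (V : Mat N →ₗ[ℂ] Mat N) : ℝ≥0∞ :=
  ⨆ Q : {Q : Mat N // Q.PosDef}, ⨅ v : {v : Fin N → ℂ // v ≠ 0},
    ENNReal.ofReal (qf (Lᴴ * Q.1 * L) v.1) / ENNReal.ofReal (qf (V Q.1) v.1)

/-- Spectral radius of a linear endomorphism of matrix space: the largest modulus of an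
eigenvalue. -/
def specRad {N : ℕ} (f : Module.End ℂ (Mat N)) : ℝ :=
  sSup {r : ℝ | ∃ μ : ℂ, f.HasEigenvalue μ ∧ r = ‖μ‖}

/-!
Let `T` be a positive operator of spectral radius `ρ` on a finite-dimensional space ordered by a
closed, pointed, spanning cone. By compactness of the unit sphere some functional `f` dominates the
norm on the cone. As the cone spans, an eigenvector `v` whose eigenvalue has modulus `ρ` is
dominated by some `x ≥ 0`: `ρ ^ n * ‖v‖ = ‖T ^ n v‖ ≤ f (T ^ n x)` for all `n`. Summing the Neumann
series of the resolvent `R t`, which is positive for `t > ρ`, gives `f (R t x) ≥ ‖v‖ / (t - ρ)`.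
Hence the vectors `R t x / f (R t x)` lie in the compact set `{q ≥ 0 | f q = 1}` and become
approximate eigenvectors for `ρ` as `t` decreases to `ρ`.
-/

section Resolvent

theorem hasSum_inv_pow_smul_pow_resolvent {A : Type*} [NormedRing A] [NormedAlgebra ℂ A]
    [CompleteSpace A] {a : A} {z : ℂ} (hz : spectralRadius ℂ a < ‖z‖ₑ) :
    HasSum (fun n : ℕ => z⁻¹ ^ (n + 1) • a ^ n) (resolvent a z) := by
  have hz0 : z ≠ 0 := enorm_ne_zero.mp hz.ne_bot
  obtain ⟨r, hzr, hr⟩ : ∃ r : NNReal, ‖z⁻¹‖ₑ < r ∧ (r : ℝ≥0∞) < (spectralRadius ℂ a)⁻¹ := by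
    refine ENNReal.lt_iff_exists_nnreal_btwn.mp ?_
    rw [enorm_inv hz0]
    exact ENNReal.inv_lt_inv.mpr hz
  have hr0 : 0 < r := ENNReal.coe_pos.mp (bot_le.trans_lt hzr)
  have hball : z⁻¹ ∈ Metric.eball (0 : ℂ) r := by rwa [Metric.mem_eball, edist_zero_right]
  have hseries := (spectrum.hasFPowerSeriesOnBall_inverse_one_sub_smul ℂ a).exchange_radius
    ((spectrum.differentiableOn_inverse_one_sub_smul hr).hasFPowerSeriesOnBall hr0)
  have hgeom : HasSum (fun n : ℕ => z⁻¹ ^ n • a ^ n) (Ring.inverse (1 - z⁻¹ • a)) := by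
    simpa using hseries.hasSum hball
  have hres : z • resolvent a z = Ring.inverse (1 - z⁻¹ • a) := by
    simpa [resolvent, Units.smul_def] using
      spectrum.units_smul_resolvent_self (r := Units.mk0 z hz0) (a := a)
  rw [(eq_inv_smul_iff₀ hz0).mpr hres]
  simpa only [smul_smul, pow_succ'] using hgeom.const_smul z⁻¹

theorem smul_resolvent_sub_apply_resolvent {𝕜 E : Type*} [NontriviallyNormedField 𝕜]
    [NormedAddCommGroup E] [NormedSpace 𝕜 E] {T : E →L[𝕜] E} {z : 𝕜}
    (hz : z ∈ resolventSet 𝕜 T) (x : E) : z • resolvent T z x - T (resolvent T z x) = x := by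
  have hinv : (algebraMap 𝕜 (E →L[𝕜] E) z - T) * resolvent T z = 1 :=
    Ring.mul_inverse_cancel _ hz
  simpa [Algebra.algebraMap_eq_smul_one] using congr($hinv x)

variable {E : Type*} [NormedAddCommGroup E] [NormedSpace ℂ E] {T : E →L[ℂ] E}

theorem exists_hasEigenvector_enorm_eq_spectralRadius [FiniteDimensional ℂ E] [Nontrivial E]
    (T : E →L[ℂ] E) :
    ∃ (μ : ℂ) (v : E), Module.End.HasEigenvector (T : Module.End ℂ E) μ v ∧
      ‖μ‖ₑ = spectralRadius ℂ T := by
  have : CompleteSpace E := FiniteDimensional.complete ℂ E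
  obtain ⟨μ, hμ, hnorm⟩ := spectrum.exists_nnnorm_eq_spectralRadius T
  have hμT : μ ∈ spectrum ℂ (T : Module.End ℂ E) := by
    rwa [← AlgEquiv.spectrum_eq (Module.End.toContinuousLinearMap E)]
  obtain ⟨v, hv⟩ := (Module.End.hasEigenvalue_iff_mem_spectrum.mpr hμT).exists_hasEigenvector
  exact ⟨μ, v, hv, hnorm⟩

theorem norm_smul_sub_apply_inv_smul_le {a r δ : ℝ} {x y : E} (ha : 0 < a) (hδ : 0 ≤ δ)
    (hy : (r + δ) • y - T y = x) :
    ‖r • a⁻¹ • y - T (a⁻¹ • y)‖ ≤ a⁻¹ * ‖x‖ + δ * ‖a⁻¹ • y‖ := by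
  have herr : r • a⁻¹ • y - T (a⁻¹ • y) = a⁻¹ • x - δ • a⁻¹ • y := by
    rw [← hy, T.map_smul_of_tower]
    module
  calc ‖r • a⁻¹ • y - T (a⁻¹ • y)‖ ≤ ‖a⁻¹ • x‖ + ‖δ • a⁻¹ • y‖ := herr ▸ norm_sub_le _ _
    _ = a⁻¹ * ‖x‖ + δ * ‖a⁻¹ • y‖ := by
      rw [norm_smul_of_nonneg (inv_nonneg.mpr ha.le), norm_smul_of_nonneg hδ]

variable [CompleteSpace E] {t : ℝ}

theorem hasSum_inv_pow_smul_resolvent_apply (ht : spectralRadius ℂ T < ENNReal.ofReal t) (x : E) :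
    HasSum (fun n : ℕ => t⁻¹ ^ (n + 1) • (T ^ n) x) (resolvent T (t : ℂ) x) := by
  have hz : spectralRadius ℂ T < ‖(t : ℂ)‖ₑ := by
    simpa only [enorm_eq_nnnorm, Complex.nnnorm_real] using ht.trans_le (Real.ofReal_le_enorm t)
  simpa [← Complex.coe_smul] using
    (ContinuousLinearMap.apply ℂ E x).hasSum (hasSum_inv_pow_smul_pow_resolvent hz)

theorem div_sub_le_functional_resolvent {f : E →L[ℝ] ℝ} {c r : ℝ} {x : E} (hr : 0 ≤ r)
    (hrt : r < t) (ht : spectralRadius ℂ T < ENNReal.ofReal t)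
    (hx : ∀ n : ℕ, r ^ n * c ≤ f ((T ^ n) x)) : c / (t - r) ≤ f (resolvent T (t : ℂ) x) := by
  have ht0 : 0 < t := hr.trans_lt hrt
  have hgeom : HasSum (fun n : ℕ => t⁻¹ ^ (n + 1) * (r ^ n * c)) (c / (t - r)) := by
    have hratio : t⁻¹ * r < 1 := (inv_mul_lt_one₀ ht0).mpr hrt
    have hsum := (hasSum_geometric_of_lt_one (by positivity) hratio).mul_left (t⁻¹ * c)
    have hlimit : t⁻¹ * c * (1 - t⁻¹ * r)⁻¹ = c / (t - r) := by
      rw [div_eq_mul_inv, mul_right_comm, ← mul_inv, mul_sub, mul_inv_cancel_left₀ ht0.ne',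
        mul_one, mul_comm]
    rw [← hlimit]
    exact hsum.congr_fun fun n => by ring
  refine hasSum_le (fun n => ?_) hgeom (f.hasSum (hasSum_inv_pow_smul_resolvent_apply ht x))
  rw [map_smul, smul_eq_mul]
  exact mul_le_mul_of_nonneg_left (hx n) (by positivity)

end Resolvent

theorem exists_mem_eq_zero_of_forall_norm_le {X F : Type*} [TopologicalSpace X]
    [NormedAddCommGroup F] {s : Set X} (hs : IsCompact s) {g : X → F} (hg : ContinuousOn g s)
    (happrox : ∀ ε > 0, ∃ x ∈ s, ‖g x‖ ≤ ε) : ∃ x ∈ s, g x = 0 := by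
  obtain ⟨x₁, hx₁, -⟩ := happrox 1 one_pos
  obtain ⟨x, hx, hmin⟩ := hs.exists_isMinOn ⟨x₁, hx₁⟩ hg.norm
  refine ⟨x, hx, norm_le_zero_iff.mp (le_of_forall_pos_le_add fun ε hε => ?_)⟩
  obtain ⟨y, hy, hyε⟩ := happrox ε hε
  simpa using (hmin hy).trans hyε

section PositiveFunctional

variable {E : Type*} [NormedAddCommGroup E] [NormedSpace ℝ E] [PartialOrder E]
  [OrderClosedTopology E]

theorem isCompact_nonneg_inter_level [ProperSpace E] {f : E →L[ℝ] ℝ}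
    (hf : ∀ x, 0 ≤ x → ‖x‖ ≤ f x) (c : ℝ) : IsCompact {x : E | 0 ≤ x ∧ f x = c} := by
  refine (isCompact_closedBall (0 : E) c).of_isClosed_subset
    (isClosed_Ici.inter (isClosed_eq f.continuous continuous_const)) fun x hx => ?_
  simpa [hx.2] using hf x hx.1

variable [IsOrderedAddMonoid E] [PosSMulMono ℝ E]

theorem exists_nonneg_functional_pos {x : E} (hx : 0 < x) :
    ∃ f : E →L[ℝ] ℝ, (∀ y, 0 ≤ y → 0 ≤ f y) ∧ 0 < f x := by
  have hneg : -x ∉ ProperCone.positive ℝ E := by simpa using hx.not_ge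
  obtain ⟨f, hf, hfx⟩ := (ProperCone.positive ℝ E).hyperplane_separation_point hneg
  exact ⟨f, hf, by simpa using hfx⟩

open scoped Topology in
theorem exists_functional_one_le_of_isCompact {s : Set E} (hs : IsCompact s)
    (hpos : ∀ x ∈ s, 0 < x) : ∃ f : E →L[ℝ] ℝ, ∀ x ∈ s, 1 ≤ f x := by
  suffices ∃ f : E →L[ℝ] ℝ, (∀ y, 0 ≤ y → 0 ≤ f y) ∧ ∀ x ∈ s, 0 ≤ x → 1 ≤ f x by
    obtain ⟨f, -, hf⟩ := this
    exact ⟨f, fun x hx => hf x hx (hpos x hx).le⟩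
  refine hs.induction_on
    (p := fun u => ∃ f : E →L[ℝ] ℝ, (∀ y, 0 ≤ y → 0 ≤ f y) ∧ ∀ x ∈ u, 0 ≤ x → 1 ≤ f x)
    ⟨0, by simp, by simp⟩ ?mono ?union ?nhds
  case mono =>
    rintro u w huw ⟨f, hf, hfw⟩
    exact ⟨f, hf, fun x hx => hfw x (huw hx)⟩
  case union =>
    rintro u w ⟨f, hf, hfu⟩ ⟨g, hg, hgw⟩
    refine ⟨f + g, fun y hy => add_nonneg (hf y hy) (hg y hy), ?_⟩
    rintro x (hx | hx) hx0
    · exact le_add_of_le_of_nonneg (hfu x hx hx0) (hg x hx0)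
    · exact le_add_of_nonneg_of_le (hf x hx0) (hgw x hx hx0)
  case nhds =>
    intro x hx
    obtain ⟨f, hf, hfx⟩ := exists_nonneg_functional_pos (hpos x hx)
    have hnhds : {y | f x / 2 < f y} ∈ 𝓝 x :=
      f.continuous.continuousAt.eventually (lt_mem_nhds (half_lt_self hfx))
    refine ⟨_, mem_nhdsWithin_of_mem_nhds hnhds, (f x / 2)⁻¹ • f,
      fun y hy => smul_nonneg (inv_nonneg.mpr (half_pos hfx).le) (hf y hy), fun y hy _ => ?_⟩
    rw [_root_.smul_apply, smul_eq_mul, one_le_inv_mul₀ (half_pos hfx)]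
    exact le_of_lt hy

theorem exists_functional_norm_le [ProperSpace E] :
    ∃ f : E →L[ℝ] ℝ, ∀ x, 0 ≤ x → ‖x‖ ≤ f x := by
  have hcompact : IsCompact (Set.Ici (0 : E) ∩ Metric.sphere (0 : E) 1) :=
    (isCompact_sphere _ _).inter_left isClosed_Ici
  obtain ⟨f, hf⟩ := exists_functional_one_le_of_isCompact hcompact fun x hx =>
    lt_of_le_of_ne hx.1 (Metric.ne_of_mem_sphere hx.2 one_ne_zero).symm
  refine ⟨f, fun x hx => ?_⟩
  rcases eq_or_ne x 0 with rfl | hx0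
  · simp
  have hnorm : 0 < ‖x‖ := norm_pos_iff.mpr hx0
  have hunit : 1 ≤ f (‖x‖⁻¹ • x) :=
    hf _ ⟨smul_nonneg (inv_nonneg.mpr hnorm.le) hx, by simp [norm_smul, hnorm.ne']⟩
  rwa [map_smul, smul_eq_mul, one_le_inv_mul₀ hnorm] at hunit

end PositiveFunctional

section PositiveOperator

variable {E : Type*} [NormedAddCommGroup E] [NormedSpace ℂ E] [PartialOrder E]
  {T : E →L[ℂ] E} {f : E →L[ℝ] ℝ}

theorem pow_apply_nonneg (hT : ∀ x, 0 ≤ x → 0 ≤ T x) (n : ℕ) {x : E} (hx : 0 ≤ x) :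
    0 ≤ (T ^ n) x := by
  induction n with
  | zero => simpa using hx
  | succ n ih => simpa only [pow_succ', mul_apply_eq_comp] using hT _ ih

variable [IsOrderedAddMonoid E] [PosSMulMono ℝ E]

theorem exists_nonneg_forall_norm_apply_le (hf : ∀ x, 0 ≤ x → ‖x‖ ≤ f x) {x : E}
    (hx : x ∈ Submodule.span ℂ {y : E | 0 ≤ y}) :
    ∃ y, 0 ≤ y ∧ ∀ S : E →L[ℂ] E, (∀ z, 0 ≤ z → 0 ≤ S z) → ‖S x‖ ≤ f (S y) := by
  induction hx using Submodule.span_induction with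
  | mem x hx => exact ⟨x, hx, fun S hS => hf _ (hS x hx)⟩
  | zero => exact ⟨0, le_rfl, fun S _ => by simp⟩
  | add x₁ x₂ _ _ ih₁ ih₂ =>
    obtain ⟨y₁, hy₁, hle₁⟩ := ih₁
    obtain ⟨y₂, hy₂, hle₂⟩ := ih₂
    refine ⟨y₁ + y₂, add_nonneg hy₁ hy₂, fun S hS => ?_⟩
    simpa only [map_add] using norm_add_le_of_le (hle₁ S hS) (hle₂ S hS)
  | smul c x _ ih =>
    obtain ⟨y, hy, hle⟩ := ih
    refine ⟨‖c‖ • y, smul_nonneg (norm_nonneg c) hy, fun S hS => ?_⟩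
    rw [map_smul, norm_smul, S.map_smul_of_tower, map_smul, smul_eq_mul]
    exact mul_le_mul_of_nonneg_left (hle S hS) (norm_nonneg c)

theorem exists_nonneg_forall_norm_pow_mul_le (hT : ∀ x, 0 ≤ x → 0 ≤ T x)
    (hf : ∀ x, 0 ≤ x → ‖x‖ ≤ f x) {μ : ℂ} {v : E}
    (hv : Module.End.HasEigenvector (T : Module.End ℂ E) μ v)
    (hspan : v ∈ Submodule.span ℂ {y : E | 0 ≤ y}) :
    ∃ y, 0 ≤ y ∧ ∀ n : ℕ, ‖μ‖ ^ n * ‖v‖ ≤ f ((T ^ n) y) := by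
  obtain ⟨y, hy, hle⟩ := exists_nonneg_forall_norm_apply_le hf hspan
  refine ⟨y, hy, fun n => ?_⟩
  have hpow : (T ^ n) v = μ ^ n • v := by
    rw [← hv.pow_apply n, ← ContinuousLinearMap.toLinearMap_pow, ContinuousLinearMap.coe_coe]
  simpa only [hpow, norm_smul, norm_pow] using hle (T ^ n) fun z => pow_apply_nonneg hT n

variable [OrderClosedTopology E]

theorem resolvent_apply_nonneg [CompleteSpace E] (hT : ∀ x, 0 ≤ x → 0 ≤ T x) {t : ℝ}
    (ht : spectralRadius ℂ T < ENNReal.ofReal t) {x : E} (hx : 0 ≤ x) :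
    0 ≤ resolvent T (t : ℂ) x := by
  have ht0 : 0 < t := ENNReal.ofReal_pos.mp (bot_le.trans_lt ht)
  exact (hasSum_inv_pow_smul_resolvent_apply ht x).nonneg fun n =>
    smul_nonneg (by positivity) (pow_apply_nonneg hT n hx)

theorem exists_nonneg_smul_sub_apply_eq [CompleteSpace E] (hT : ∀ x, 0 ≤ x → 0 ≤ T x)
    {c r t : ℝ} {x : E} (hr : 0 ≤ r) (hrt : r < t) (ht : spectralRadius ℂ T < ENNReal.ofReal t)
    (hx : 0 ≤ x) (hxn : ∀ n : ℕ, r ^ n * c ≤ f ((T ^ n) x)) :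
    ∃ y, 0 ≤ y ∧ t • y - T y = x ∧ c / (t - r) ≤ f y := by
  have hmem : (t : ℂ) ∈ resolventSet ℂ T := by
    refine spectrum.mem_resolventSet_of_spectralRadius_lt ?_
    simpa only [enorm_eq_nnnorm, Complex.nnnorm_real] using ht.trans_le (Real.ofReal_le_enorm t)
  refine ⟨resolvent T (t : ℂ) x, resolvent_apply_nonneg hT ht hx, ?_,
    div_sub_le_functional_resolvent hr hrt ht hxn⟩
  simpa only [Complex.coe_smul] using smul_resolvent_sub_apply_resolvent hmem x

theorem exists_nonneg_norm_smul_sub_apply_le [CompleteSpace E] (hT : ∀ x, 0 ≤ x → 0 ≤ T x)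
    (hf : ∀ x, 0 ≤ x → ‖x‖ ≤ f x) {c r δ : ℝ} {x : E}
    (hr : spectralRadius ℂ T = ENNReal.ofReal r) (hr0 : 0 ≤ r) (hc : 0 < c) (hx : 0 ≤ x)
    (hxn : ∀ n : ℕ, r ^ n * c ≤ f ((T ^ n) x)) (hδ : 0 < δ) :
    ∃ q ∈ {q | 0 ≤ q ∧ f q = 1}, ‖r • q - T q‖ ≤ δ * (‖x‖ / c + 1) := by
  have hrt : r < r + δ := lt_add_of_pos_right r hδ
  have ht : spectralRadius ℂ T < ENNReal.ofReal (r + δ) :=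
    hr ▸ (ENNReal.ofReal_lt_ofReal_iff (hr0.trans_lt hrt)).mpr hrt
  obtain ⟨y, hy, hres, hlarge⟩ := exists_nonneg_smul_sub_apply_eq hT hr0 hrt ht hx hxn
  rw [add_sub_cancel_left] at hlarge
  have hfy : 0 < f y := (div_pos hc hδ).trans_le hlarge
  have hmem : (f y)⁻¹ • y ∈ {q | 0 ≤ q ∧ f q = 1} :=
    ⟨smul_nonneg (inv_nonneg.mpr hfy.le) hy, by
      rw [map_smul, smul_eq_mul, inv_mul_cancel₀ hfy.ne']⟩
  refine ⟨(f y)⁻¹ • y, hmem, ?_⟩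
  calc ‖r • (f y)⁻¹ • y - T ((f y)⁻¹ • y)‖
      ≤ (f y)⁻¹ * ‖x‖ + δ * ‖(f y)⁻¹ • y‖ := norm_smul_sub_apply_inv_smul_le hfy hδ.le hres
    _ ≤ (c / δ)⁻¹ * ‖x‖ + δ * 1 := by
        gcongr
        exact (hf _ hmem.1).trans_eq hmem.2
    _ = δ * (‖x‖ / c + 1) := by rw [inv_div]; ring

theorem exists_nonneg_apply_eq_spectralRadius_smul [FiniteDimensional ℂ E] [Nontrivial E]
    (hspan : Submodule.span ℂ {x : E | 0 ≤ x} = ⊤) (hT : ∀ x, 0 ≤ x → 0 ≤ T x) :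
    ∃ x, 0 ≤ x ∧ x ≠ 0 ∧ T x = (spectralRadius ℂ T).toReal • x := by
  have : ProperSpace E := FiniteDimensional.proper ℂ E
  obtain ⟨f, hf⟩ := exists_functional_norm_le (E := E)
  obtain ⟨μ, v, hv, hμ⟩ := exists_hasEigenvector_enorm_eq_spectralRadius T
  have hρ : spectralRadius ℂ T = ENNReal.ofReal ‖μ‖ := by rw [← hμ, ofReal_norm]
  obtain ⟨y, hy, hvy⟩ := exists_nonneg_forall_norm_pow_mul_le hT hf hv (hspan ▸ Submodule.mem_top)
  have happrox : ∀ ε > 0, ∃ q ∈ {q | 0 ≤ q ∧ f q = 1}, ‖‖μ‖ • q - T q‖ ≤ ε := fun ε hε => by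
    have hM : 0 < ‖y‖ / ‖v‖ + 1 := by positivity
    simpa only [div_mul_cancel₀ _ hM.ne'] using exists_nonneg_norm_smul_sub_apply_le hT hf hρ
      (norm_nonneg μ) (norm_pos_iff.mpr hv.2) hy hvy (div_pos hε hM)
  obtain ⟨q, ⟨hq, hfq⟩, hTq⟩ := exists_mem_eq_zero_of_forall_norm_le
    (isCompact_nonneg_inter_level hf 1) (by fun_prop) happrox
  refine ⟨q, hq, ?_, ?_⟩
  · rintro rfl
    simp at hfq
  · rw [hρ, ENNReal.toReal_ofReal (norm_nonneg μ)]
    exact (sub_eq_zero.mp hTq).symm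

end PositiveOperator

open scoped MatrixOrder Matrix.Norms.L2Operator in
theorem exists_posSemidef_apply_eq_spectralRadius_smul {n : Type*} [Finite n] [Nonempty n]
    {S : Module.End ℂ (Matrix n n ℂ)}
    (hS : ∀ Q : Matrix n n ℂ, Q.PosSemidef → (S Q).PosSemidef) :
    ∃ Q : Matrix n n ℂ, Q.PosSemidef ∧ Q ≠ 0 ∧ S Q = ((spectralRadius ℂ S).toReal : ℂ) • Q := by
  classical
  have := Fintype.ofFinite n
  let T := Module.End.toContinuousLinearMap (Matrix n n ℂ) S
  have hρ : spectralRadius ℂ T = spectralRadius ℂ S := by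
    simp only [spectralRadius, T, AlgEquiv.spectrum_eq]
  obtain ⟨Q, hQ, hQ0, hTQ⟩ := exists_nonneg_apply_eq_spectralRadius_smul (T := T)
    CStarAlgebra.span_nonneg fun Q hQ => (hS Q hQ.posSemidef).nonneg
  exact ⟨Q, hQ.posSemidef, hQ0, by rwa [hρ, ← Complex.coe_smul] at hTQ⟩

theorem specRad_eq_toReal_spectralRadius {N : ℕ} (S : Module.End ℂ (Mat N)) :
    specRad S = (spectralRadius ℂ S).toReal := by
  have hset : {r : ℝ | ∃ μ : ℂ, S.HasEigenvalue μ ∧ r = ‖μ‖} =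
      Set.range fun μ : spectrum ℂ S => ‖(μ : ℂ)‖ := by
    ext r
    simp [Module.End.hasEigenvalue_iff_mem_spectrum, eq_comm]
  rw [specRad, hset, sSup_range, spectralRadius, iSup_subtype',
    ENNReal.toReal_iSup fun _ => ENNReal.coe_ne_top]
  simp only [ENNReal.coe_toReal, coe_nnnorm]

/-- `𝒮` sends positive semidefinite matrices to positive semidefinite matrices,
and its spectral radius `ρ` is an eigenvalue of `𝒮` with a nonzero positive semidefinite
eigenmatrix. -/
theorem stmt0 {N : ℕ} (hN : 0 < N) (L : Mat N) (hL : IsUnit L)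
    (V : Mat N →ₗ[ℂ] Mat N)
    (hVherm : ∀ Q : Mat N, Q.IsHermitian → (V Q).IsHermitian)
    (hVpsd : ∀ Q : Mat N, Q.PosSemidef → (V Q).PosSemidef) :
    (∀ Q : Mat N, Q.PosSemidef → ((Smap L V) Q).PosSemidef) ∧
    ∃ Q : Mat N, Q.PosSemidef ∧ Q ≠ 0 ∧
      (Smap L V) Q = (specRad (Smap L V) : ℂ) • Q := by
  have hpos : ∀ Q : Mat N, Q.PosSemidef → ((Smap L V) Q).PosSemidef := fun Q hQ =>
    hVpsd _ (hQ.conjTranspose_mul_mul_same L⁻¹)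
  have : NeZero N := ⟨hN.ne'⟩
  obtain ⟨Q, hQ, hQ0, hSQ⟩ := exists_posSemidef_apply_eq_spectralRadius_smul hpos
  exact ⟨hpos, Q, hQ, hQ0, by rw [hSQ, specRad_eq_toReal_spectralRadius]⟩

end
end

section
/- The quantity P equals the reciprocal of the spectral radius ρ of 𝒮 (the largest modulus of an eigenvalue of 𝒮 regarded as a ℂ-linear endomorphism of M_N): P = 1/ρ, with the convention 1/0 = ∞. -/
open Matrix ComplexOrder ENNReal

noncomputable section

/-! Rescaling `𝒮` reduces `P = 1 / ρ` to the threshold `ρ = 1`. If `𝒮[W] ⪯ W` with `W ≻ 0`, then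
`W` dominates a multiple of the identity, so the powers of `𝒮` are bounded and `ρ ≤ 1`. If `ρ < 1`,
then `𝒮ⁿ[1] ⪯ 1` for some `n ≥ 1` by Gelfand's formula, and the truncated Neumann series
`W = ∑_{k < n} 𝒮ᵏ[1]` satisfies `𝒮[W] = W + 𝒮ⁿ[1] - 1 ⪯ W`. Both arguments work for positive maps
of an arbitrary unital C⋆-algebra; the substitution `W = Lᴴ Q L` turns the quotients in `P` into the
comparison of `t 𝒮[W]` with `W`. -/

open scoped NNReal

/-- The Collatz–Wielandt number of a self-map `f`: the supremum in `[0, ∞]` of the scalars `t ≥ 0`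
for which `t • f` maps some strictly positive `w` below itself. Both `P` and `1 / ρ` are computed
by comparison with it. This is the reciprocal of the usual normalization by the scalars `s` with
`f w ≤ s • w`, so that nilpotent maps need no division by zero. -/
def collatzWielandt {E : Type*} [LE E] [Monoid E] [Zero E] [SMul ℝ≥0 E] (f : E → E) : ℝ≥0∞ :=
  ⨆ (t : ℝ≥0) (_ : ∃ w, IsStrictlyPositive w ∧ t • f w ≤ w), (t : ℝ≥0∞)

section SpectralRadius

lemma spectralRadius_smul {𝕜 A : Type*} [NormedField 𝕜] [Ring A] [Algebra 𝕜 A] (k : 𝕜) (a : A) :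
    spectralRadius 𝕜 (k • a) = ‖k‖₊ * spectralRadius 𝕜 a := by
  obtain rfl | hk := eq_or_ne k 0
  · simp only [zero_smul, spectrum.spectralRadius_zero, nnnorm_zero, ENNReal.coe_zero, zero_mul]
  · have h : spectrum 𝕜 (k • a) = (k * ·) '' spectrum 𝕜 a :=
      spectrum.unit_smul_eq_smul a (Units.mk0 k hk)
    simp only [spectralRadius, h, iSup_image, nnnorm_mul, ENNReal.coe_mul, ENNReal.mul_iSup]

lemma spectralRadius_le_one_of_norm_pow_le {𝕜 A : Type*} [NormedField 𝕜] [NormedRing A]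
    [NormedAlgebra 𝕜 A] [CompleteSpace A] {a : A} {C : ℝ} (h : ∀ n : ℕ, ‖a ^ n‖ ≤ C) :
    spectralRadius 𝕜 a ≤ 1 := by
  refine iSup₂_le fun z hz ↦ ?_
  have hpow (n : ℕ) : ‖z‖ ^ n ≤ C * ‖(1 : A)‖ := calc
    ‖z‖ ^ n = ‖z ^ n‖ := (norm_pow z n).symm
    _ ≤ ‖a ^ n‖ * ‖(1 : A)‖ := spectrum.norm_le_norm_mul_of_mem (spectrum.pow_mem_pow a n hz)
    _ ≤ C * ‖(1 : A)‖ := by gcongr; exact h n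
  have hz1 : ‖z‖ ≤ 1 := by
    by_contra! hlt
    obtain ⟨n, hn⟩ := pow_unbounded_of_one_lt (C * ‖(1 : A)‖) hlt
    exact (hpow n).not_gt hn
  exact_mod_cast hz1

lemma eventually_norm_pow_lt_one_of_spectralRadius_lt_one {A : Type*} [NormedRing A]
    [NormedAlgebra ℂ A] [CompleteSpace A] {a : A} (h : spectralRadius ℂ a < 1) :
    ∀ᶠ n : ℕ in Filter.atTop, ‖a ^ n‖ < 1 := by
  have hroot :=
    (spectrum.pow_nnnorm_pow_one_div_tendsto_nhds_spectralRadius a).eventually_lt_const h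
  filter_upwards [hroot, Filter.eventually_gt_atTop 0] with n hn hn0
  have hlt : (‖a ^ n‖₊ : ℝ≥0∞) < 1 :=
    (ENNReal.rpow_lt_rpow_iff (by positivity)).1 (hn.trans_eq (ENNReal.one_rpow (1 / n : ℝ)).symm)
  exact_mod_cast hlt

end SpectralRadius

section Powers

variable {R E : Type*} [Semiring R] [TopologicalSpace E] [AddCommMonoid E] [Module R E]
  [Preorder E] {f : E →L[R] E}

lemma monotone_pow (hf : Monotone f) (n : ℕ) : Monotone (f ^ n) := by
  rw [FunLike.coe_pow_eq_iterate]
  exact hf.iterate n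

lemma pow_apply_nonneg_s1 (hf : Monotone f) {a : E} (ha : 0 ≤ a) (n : ℕ) : 0 ≤ (f ^ n) a := by
  simpa only [map_zero] using monotone_pow hf n ha

lemma pow_apply_le_of_apply_le (hf : Monotone f) {w : E} (hfw : f w ≤ w) (n : ℕ) :
    (f ^ n) w ≤ w := by
  rw [FunLike.coe_pow_eq_iterate]
  exact hf.antitone_iterate_of_map_le hfw n.zero_le

end Powers

section PositiveMap

variable {A : Type*} [CStarAlgebra A] [PartialOrder A] [StarOrderedRing A]

lemma norm_apply_le_of_monotone {f : A →L[ℂ] A} (hf : Monotone f) (a : A) :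
    ‖f a‖ ≤ 4 * ‖f 1‖ * ‖a‖ := by
  obtain ⟨x, hx, hxa, ha⟩ := CStarAlgebra.exists_sum_four_nonneg a
  let F : A →ₚ[ℂ] A := { f.toLinearMap with monotone' := hf }
  have hterm (i : Fin 4) : ‖Complex.I ^ (i : ℕ) • f (x i)‖ ≤ ‖f 1‖ * ‖a‖ := calc
    ‖Complex.I ^ (i : ℕ) • f (x i)‖ = ‖f (x i)‖ := by simp [norm_smul]
    _ ≤ ‖f 1‖ * ‖x i‖ := F.norm_apply_le_of_nonneg _ (hx i)
    _ ≤ ‖f 1‖ * ‖a‖ := by gcongr; exact hxa i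
  calc ‖f a‖ = ‖∑ i : Fin 4, Complex.I ^ (i : ℕ) • f (x i)‖ := by
        conv_lhs => rw [ha, map_sum]
        simp only [map_smul]
    _ ≤ ∑ _i : Fin 4, ‖f 1‖ * ‖a‖ := norm_sum_le_of_le _ fun i _ ↦ hterm i
    _ = 4 * ‖f 1‖ * ‖a‖ := by simp [mul_assoc]

lemma opNorm_le_of_monotone {f : A →L[ℂ] A} (hf : Monotone f) : ‖f‖ ≤ 4 * ‖f 1‖ :=
  f.opNorm_le_bound (by positivity) (norm_apply_le_of_monotone hf)

lemma exists_one_le_smul_of_isStrictlyPositive {w : A} (hw : IsStrictlyPositive w) :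
    ∃ c : ℝ≥0, 1 ≤ c • w := by
  nontriviality A
  obtain ⟨r, hr, hrw⟩ :=
    (CFC.exists_pos_algebraMap_le_iff hw.isSelfAdjoint).2 fun x hx ↦ hw.spectrum_pos hx
  lift r to ℝ≥0 using hr.le
  have hr0 : r ≠ 0 := (NNReal.coe_pos.1 hr).ne'
  refine ⟨r⁻¹, ?_⟩
  calc (1 : A) = r⁻¹ • r • (1 : A) := (inv_smul_smul₀ hr0 1).symm
    _ ≤ r⁻¹ • w := by
      gcongr
      rwa [Algebra.algebraMap_eq_smul_one] at hrw

lemma spectralRadius_le_one_of_apply_le {f : A →L[ℂ] A} (hf : Monotone f) {w : A}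
    (hw : IsStrictlyPositive w) (hfw : f w ≤ w) : spectralRadius ℂ f ≤ 1 := by
  obtain ⟨c, hc⟩ := exists_one_le_smul_of_isStrictlyPositive hw
  refine spectralRadius_le_one_of_norm_pow_le (C := 4 * ‖c • w‖) fun n ↦ ?_
  have hmono : Monotone (f ^ n) := monotone_pow hf n
  have hone : (f ^ n) 1 ≤ c • w := calc
    (f ^ n) 1 ≤ (f ^ n) (c • w) := hmono hc
    _ = c • (f ^ n) w := (f ^ n).map_smul_of_tower c w
    _ ≤ c • w := by gcongr; exact pow_apply_le_of_apply_le hf hfw n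
  calc ‖f ^ n‖ ≤ 4 * ‖(f ^ n) 1‖ := opNorm_le_of_monotone hmono
    _ ≤ 4 * ‖c • w‖ := by
      gcongr
      exact CStarAlgebra.norm_le_norm_of_nonneg_of_le (pow_apply_nonneg_s1 hf zero_le_one n) hone

lemma apply_one_le_one_of_opNorm_le_one {f : A →L[ℂ] A} (hf : 0 ≤ f 1) (hnorm : ‖f‖ ≤ 1) :
    f 1 ≤ 1 := by
  nontriviality A
  rw [← CStarAlgebra.norm_le_one_iff_of_nonneg (f 1) hf]
  simpa only [norm_one, mul_one] using f.le_of_opNorm_le hnorm 1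

lemma exists_apply_le_of_spectralRadius_lt_one {f : A →L[ℂ] A} (hf : Monotone f)
    (h : spectralRadius ℂ f < 1) : ∃ w, IsStrictlyPositive w ∧ f w ≤ w := by
  obtain ⟨n, hnorm, hn⟩ := ((eventually_norm_pow_lt_one_of_spectralRadius_lt_one h).and
    (Filter.eventually_gt_atTop 0)).exists
  have hpow : (f ^ n) 1 ≤ 1 :=
    apply_one_le_one_of_opNorm_le_one (pow_apply_nonneg_s1 hf zero_le_one n) hnorm.le
  let w : A := (∑ k ∈ Finset.range n, f ^ k) 1
  have hw : 1 ≤ w := calc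
    (1 : A) = (f ^ 0) 1 := by rw [pow_zero, one_apply_eq_self]
    _ ≤ ∑ k ∈ Finset.range n, (f ^ k) 1 := Finset.single_le_sum
      (f := fun k ↦ (f ^ k) 1) (fun k _ ↦ pow_apply_nonneg_s1 hf zero_le_one k) (Finset.mem_range.2 hn)
    _ = w := by simp only [w, _root_.sum_apply]
  have hfw : f w - w = (f ^ n) 1 - 1 := congrArg (· 1) (mul_geom_sum f n)
  refine ⟨w, isStrictlyPositive_one.of_le hw, sub_nonpos.1 ?_⟩
  rw [hfw]
  exact sub_nonpos.2 hpow

theorem collatzWielandt_eq_inv_spectralRadius {f : A →L[ℂ] A} (hf : Monotone f) :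
    collatzWielandt f = (spectralRadius ℂ f)⁻¹ := by
  have hmono (t : ℝ≥0) : Monotone (t • f) := fun x y hxy ↦ by
    change t • f x ≤ t • f y
    gcongr
    exact hf hxy
  have hradius (t : ℝ≥0) : spectralRadius ℂ (t • f) = t * spectralRadius ℂ f := by
    have h : t • f = (t : ℂ) • f := rfl
    rw [h, spectralRadius_smul, Complex.nnnorm_real, NNReal.nnnorm_eq]
  apply le_antisymm
  · refine iSup₂_le fun t ⟨w, hw, hfw⟩ ↦ ?_
    rw [ENNReal.le_inv_iff_mul_le, ← hradius]
    exact spectralRadius_le_one_of_apply_le (hmono t) hw hfw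
  · refine ENNReal.le_of_forall_nnreal_lt fun t ht ↦ ?_
    have hlt : spectralRadius ℂ (t • f) < 1 := by
      rw [hradius]
      exact ENNReal.mul_lt_of_lt_div (by rwa [one_div])
    exact le_iSup₂_of_le t (exists_apply_le_of_spectralRadius_lt_one (hmono t) hlt) le_rfl

end PositiveMap

section Matrix

open scoped MatrixOrder Matrix.Norms.L2Operator

variable {N : ℕ} {L : Mat N} {V : Mat N →ₗ[ℂ] Mat N}

lemma conjBy_apply (L Q : Mat N) : conjBy L Q = Lᴴ * Q * L := rfl

lemma conjBy_conjBy (L M Q : Mat N) : conjBy L (conjBy M Q) = conjBy (M * L) Q := by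
  simp only [conjBy_apply, conjTranspose_mul, Matrix.mul_assoc]

lemma conjBy_one (Q : Mat N) : conjBy 1 Q = Q := by
  simp only [conjBy_apply, conjTranspose_one, Matrix.one_mul, Matrix.mul_one]

lemma conjBy_inv_conjBy (hL : IsUnit L) (Q : Mat N) : conjBy L⁻¹ (conjBy L Q) = Q := by
  rw [conjBy_conjBy, mul_nonsing_inv L ((isUnit_iff_isUnit_det L).1 hL), conjBy_one]

lemma conjBy_conjBy_inv (hL : IsUnit L) (Q : Mat N) : conjBy L (conjBy L⁻¹ Q) = Q := by
  rw [conjBy_conjBy, nonsing_inv_mul L ((isUnit_iff_isUnit_det L).1 hL), conjBy_one]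

lemma posDef_conjBy (hL : IsUnit L) {Q : Mat N} (hQ : Q.PosDef) : (conjBy L Q).PosDef :=
  (IsUnit.posDef_star_left_conjugate_iff hL).2 hQ

lemma qf_pos {A : Mat N} (hA : A.PosDef) {v : Fin N → ℂ} (hv : v ≠ 0) : 0 < qf A v :=
  (Complex.lt_def.1 (hA.dotProduct_mulVec_pos hv)).1

lemma posSemidef_iff_forall_qf_nonneg {A : Mat N} (hA : A.IsHermitian) :
    A.PosSemidef ↔ ∀ v ≠ 0, 0 ≤ qf A v := by
  refine ⟨fun h v _ ↦ (Complex.le_def.1 (h.dotProduct_mulVec_nonneg v)).1, fun h ↦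
    .of_dotProduct_mulVec_nonneg hA fun v ↦ ?_⟩
  obtain rfl | hv := eq_or_ne v 0
  · rw [mulVec_zero, dotProduct_zero]
  · exact Complex.le_def.2 ⟨h v hv, (hA.im_star_dotProduct_mulVec_self v).symm⟩

lemma qf_sub_smul (A B : Mat N) (t : ℝ≥0) (v : Fin N → ℂ) :
    qf (A - t • B) v = qf A v - t * qf B v := by
  simp [qf, sub_mulVec, smul_mulVec, NNReal.smul_def]

lemma smul_le_iff_forall_qf {A B : Mat N} (hA : A.IsHermitian) (hB : B.IsHermitian) (t : ℝ≥0) :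
    t • B ≤ A ↔ ∀ v ≠ 0, t * qf B v ≤ qf A v := by
  rw [le_iff, posSemidef_iff_forall_qf_nonneg (hA.sub (hB.smul (IsSelfAdjoint.all t)))]
  simp only [qf_sub_smul, sub_nonneg]

lemma le_iInf_qf_div_iff {A B : Mat N} (hA : A.PosDef) (hB : B.IsHermitian) (t : ℝ≥0) :
    (t : ℝ≥0∞) ≤ ⨅ v : {v : Fin N → ℂ // v ≠ 0},
      ENNReal.ofReal (qf A v.1) / ENNReal.ofReal (qf B v.1) ↔ t • B ≤ A := by
  rw [smul_le_iff_forall_qf hA.isHermitian hB, le_iInf_iff, Subtype.forall]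
  refine forall₂_congr fun v hv ↦ ?_
  have hpos : 0 < qf A v := qf_pos hA hv
  rw [ENNReal.le_div_iff_mul_le (.inr (ENNReal.ofReal_pos.2 hpos).ne') (.inr ENNReal.ofReal_ne_top),
    ← ENNReal.ofReal_coe_nnreal, ← ENNReal.ofReal_mul t.coe_nonneg,
    ENNReal.ofReal_le_ofReal_iff hpos.le]

theorem Pval_eq_collatzWielandt (hL : IsUnit L)
    (hV : ∀ Q : Mat N, Q.IsHermitian → (V Q).IsHermitian) :
    Pval L V = collatzWielandt (Smap L V) := by
  apply le_antisymm
  · refine iSup_le fun ⟨Q, hQ⟩ ↦ ENNReal.le_of_forall_nnreal_lt fun t ht ↦ ?_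
    have hW : (conjBy L Q).PosDef := posDef_conjBy hL hQ
    have hSW : Smap L V (conjBy L Q) = V Q := congrArg V (conjBy_inv_conjBy hL Q)
    refine le_iSup₂_of_le t ⟨conjBy L Q, hW.isStrictlyPositive, ?_⟩ le_rfl
    rw [hSW]
    exact (le_iInf_qf_div_iff hW (hV Q hQ.isHermitian) t).1 ht.le
  · refine iSup₂_le fun t ⟨W, hW, htW⟩ ↦ ?_
    have hQ : (conjBy L⁻¹ W).PosDef := posDef_conjBy (isUnit_nonsing_inv_iff.2 hL) hW.posDef
    refine le_iSup_of_le ⟨conjBy L⁻¹ W, hQ⟩ ?_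
    rw [← conjBy_apply, conjBy_conjBy_inv hL]
    exact (le_iInf_qf_div_iff hW.posDef (hV _ hQ.isHermitian) t).2 htW

lemma monotone_of_map_posSemidef {f : Mat N →ₗ[ℂ] Mat N}
    (hf : ∀ Q : Mat N, Q.PosSemidef → (f Q).PosSemidef) : Monotone f := fun A B hAB ↦ by
  rw [le_iff, ← map_sub]
  exact hf _ hAB

theorem Pval_eq_inv_spectralRadius (hL : IsUnit L)
    (hVherm : ∀ Q : Mat N, Q.IsHermitian → (V Q).IsHermitian)
    (hVpsd : ∀ Q : Mat N, Q.PosSemidef → (V Q).PosSemidef) :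
    Pval L V = (spectralRadius ℂ (Smap L V))⁻¹ := by
  have hS : Monotone (Smap L V) := monotone_of_map_posSemidef fun Q hQ ↦
    hVpsd _ (hQ.conjTranspose_mul_mul_same L⁻¹)
  let S : Mat N →L[ℂ] Mat N := Module.End.toContinuousLinearMap (Mat N) (Smap L V)
  calc Pval L V = collatzWielandt S := Pval_eq_collatzWielandt hL hVherm
    _ = (spectralRadius ℂ S)⁻¹ := collatzWielandt_eq_inv_spectralRadius hS
    _ = (spectralRadius ℂ (Smap L V))⁻¹ := by simp only [S, spectralRadius, AlgEquiv.spectrum_eq]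

end Matrix

lemma ofReal_specRad {N : ℕ} (f : Module.End ℂ (Mat N)) :
    ENNReal.ofReal (specRad f) = spectralRadius ℂ f := by
  let moduli : Set ℝ := {r | ∃ μ : ℂ, f.HasEigenvalue μ ∧ r = ‖μ‖}
  have hbdd : BddAbove moduli := by
    refine ((Module.End.finite_hasEigenvalue f).image (‖·‖)).bddAbove.mono ?_
    rintro _ ⟨μ, hμ, rfl⟩
    exact ⟨μ, hμ, rfl⟩
  have hge : spectralRadius ℂ f ≤ ENNReal.ofReal (specRad f) := iSup₂_le fun μ hμ ↦ by
    rw [← enorm_eq_nnnorm, ← ofReal_norm]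
    exact ENNReal.ofReal_le_ofReal
      (le_csSup hbdd ⟨μ, Module.End.hasEigenvalue_iff_mem_spectrum.2 hμ, rfl⟩)
  refine le_antisymm (ENNReal.ofReal_le_of_le_toReal ?_) hge
  refine Real.sSup_le ?_ ENNReal.toReal_nonneg
  rintro _ ⟨μ, hμ, rfl⟩
  have hle : (‖μ‖₊ : ℝ≥0∞) ≤ spectralRadius ℂ f :=
    le_iSup₂_of_le μ (Module.End.hasEigenvalue_iff_mem_spectrum.1 hμ) le_rfl
  exact ENNReal.toReal_mono (hge.trans_lt ENNReal.ofReal_lt_top).ne hle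

/-- `P` equals the reciprocal of the spectral radius `ρ` of `𝒮`,
with the convention `1/0 = ∞`. -/
theorem stmt1 {N : ℕ} (hN : 0 < N) (L : Mat N) (hL : IsUnit L)
    (V : Mat N →ₗ[ℂ] Mat N)
    (hVherm : ∀ Q : Mat N, Q.IsHermitian → (V Q).IsHermitian)
    (hVpsd : ∀ Q : Mat N, Q.PosSemidef → (V Q).PosSemidef) :
    Pval L V = (ENNReal.ofReal (specRad (Smap L V)))⁻¹ := by
  rw [ofReal_specRad]
  exact Pval_eq_inv_spectralRadius hL hVherm hVpsd

end
end

section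
/- The reciprocal of P admits the following two characterizations (as elements of [0,∞], with 1/∞ = 0): 1/P = inf_{Q ≻ 0} sup_{w ≠ 0} (w* 𝒮[Q] w)/(w* Q w) = inf{ μ ≥ 0 : there exists Q ≻ 0 with 𝒮[Q] ⪯ μ·Q }. -/
open Matrix ComplexOrder ENNReal

noncomputable section

/-!
Since `L* Q L` is positive definite, the ratio `(v* L* Q L v) / (v* 𝒱[Q] v)` is never `0 / 0`, its
inverse is the ratio with numerator and denominator exchanged, and so `1/P` is the infimum over
`Q ≻ 0` of the supremum over `v ≠ 0` of the inverted ratios. The congruence `Q ↦ L* Q L` permutes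
the positive definite matrices, and `𝒮[L* Q L] = 𝒱[Q]`: substituting gives the first formula. For
Hermitian `A` and `B ≻ 0`, the bound `A ⪯ μ B` says that `μ` bounds all the ratios
`(w* A w) / (w* B w)`, which gives the second.
-/

section

variable {n 𝕜 : Type*} [Fintype n] [RCLike 𝕜]

/-- The real quadratic form `v* A v` over `ℝ` or `ℂ`; for Hermitian `A` nothing is lost by taking
the real part. -/
def reQuadForm (A : Matrix n n 𝕜) (v : n → 𝕜) : ℝ :=
  RCLike.re (star v ⬝ᵥ A *ᵥ v)

/-- The generalized Rayleigh quotient `(v* A v) / (v* B v)` in `[0,∞]`. Negative values of either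
form are truncated to `0`, a zero denominator under a positive numerator gives `∞`, and
`0 / 0 = 0`. -/
def rayleighRatio (A B : Matrix n n 𝕜) (v : n → 𝕜) : ℝ≥0∞ :=
  ENNReal.ofReal (reQuadForm A v) / ENNReal.ofReal (reQuadForm B v)

/-- The infimum of the generalized Rayleigh quotient of `A` relative to `B` over nonzero vectors. -/
def minRatio (A B : Matrix n n 𝕜) : ℝ≥0∞ :=
  ⨅ v : {v : n → 𝕜 // v ≠ 0}, rayleighRatio A B v.1

/-- The supremum of the generalized Rayleigh quotient of `A` relative to `B` over nonzero
vectors. -/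
def maxRatio (A B : Matrix n n 𝕜) : ℝ≥0∞ :=
  ⨆ v : {v : n → 𝕜 // v ≠ 0}, rayleighRatio A B v.1

theorem reQuadForm_smul_sub (A B : Matrix n n 𝕜) (μ : ℝ) (v : n → 𝕜) :
    reQuadForm ((μ : 𝕜) • B - A) v = μ * reQuadForm B v - reQuadForm A v := by
  simp only [reQuadForm, sub_mulVec, smul_mulVec, dotProduct_sub, dotProduct_smul, smul_eq_mul,
    map_sub, RCLike.re_ofReal_mul]

theorem posSemidef_iff_reQuadForm_nonneg {A : Matrix n n 𝕜} (hA : A.IsHermitian) :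
    A.PosSemidef ↔ ∀ v ≠ 0, 0 ≤ reQuadForm A v := by
  refine ⟨fun h v _ ↦ h.re_dotProduct_nonneg v, fun h ↦ .of_dotProduct_mulVec_nonneg hA fun v ↦ ?_⟩
  obtain rfl | hv := eq_or_ne v 0
  · simp
  · exact RCLike.nonneg_iff.2 ⟨h v hv, hA.im_star_dotProduct_mulVec_self v⟩

theorem ofReal_reQuadForm_ne_zero {A : Matrix n n 𝕜} (hA : A.PosDef) {v : n → 𝕜} (hv : v ≠ 0) :
    ENNReal.ofReal (reQuadForm A v) ≠ 0 :=
  (ENNReal.ofReal_pos.2 (hA.re_dotProduct_pos hv)).ne'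

theorem inv_minRatio {A : Matrix n n 𝕜} (hA : A.PosDef) (B : Matrix n n 𝕜) :
    (minRatio A B)⁻¹ = maxRatio B A := by
  rw [minRatio, ENNReal.inv_iInf]
  exact iSup_congr fun v ↦
    ENNReal.inv_div (.inl ofReal_ne_top) (.inr (ofReal_reQuadForm_ne_zero hA v.2))

theorem maxRatio_le_ofReal_iff {A B : Matrix n n 𝕜} (hA : A.IsHermitian) (hB : B.PosDef) {μ : ℝ}
    (hμ : 0 ≤ μ) :
    maxRatio A B ≤ ENNReal.ofReal μ ↔ ((μ : 𝕜) • B - A).PosSemidef := by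
  have hsub : ((μ : 𝕜) • B - A).IsHermitian :=
    (hB.isHermitian.smul (RCLike.conj_ofReal μ)).sub hA
  rw [posSemidef_iff_reQuadForm_nonneg hsub, maxRatio, iSup_le_iff, Subtype.forall]
  refine forall₂_congr fun v hv ↦ ?_
  have hBv : 0 ≤ reQuadForm B v := hB.posSemidef.re_dotProduct_nonneg v
  rw [rayleighRatio, ENNReal.div_le_iff (ofReal_reQuadForm_ne_zero hB hv) ofReal_ne_top,
    ← ENNReal.ofReal_mul hμ, ENNReal.ofReal_le_ofReal_iff (mul_nonneg hμ hBv),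
    reQuadForm_smul_sub, sub_nonneg]

end

theorem iInf_eq_sInf_ofReal_upperBounds {ι : Sort*} (s : ι → ℝ≥0∞) :
    ⨅ i, s i = sInf {x | ∃ μ : ℝ, 0 ≤ μ ∧ x = ENNReal.ofReal μ ∧ ∃ i, s i ≤ ENNReal.ofReal μ} := by
  apply le_antisymm
  · refine le_sInf ?_
    rintro _ ⟨μ, -, rfl, i, hi⟩
    exact iInf_le_of_le i hi
  · refine le_iInf fun i ↦ ?_
    obtain hi | hi := eq_or_ne (s i) ∞
    · exact hi ▸ le_top
    · have hs : ENNReal.ofReal (s i).toReal = s i := ofReal_toReal hi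
      exact sInf_le ⟨_, toReal_nonneg, hs.symm, i, hs.ge⟩

theorem iInf_maxRatio_eq_sInf {n 𝕜 : Type*} [Fintype n] [RCLike 𝕜]
    {T : Matrix n n 𝕜 → Matrix n n 𝕜} (hT : ∀ Q, Q.PosDef → (T Q).IsHermitian) :
    ⨅ Q : {Q : Matrix n n 𝕜 // Q.PosDef}, maxRatio (T Q.1) Q.1 =
      sInf {x | ∃ μ : ℝ, 0 ≤ μ ∧ x = ENNReal.ofReal μ ∧
        ∃ Q : Matrix n n 𝕜, Q.PosDef ∧ ((μ : 𝕜) • Q - T Q).PosSemidef} := by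
  rw [iInf_eq_sInf_ofReal_upperBounds]
  congr! 3 with x
  refine exists_congr fun μ ↦ and_congr_right fun hμ ↦ and_congr_right fun _ ↦ ?_
  simp only [Subtype.exists, exists_prop]
  exact exists_congr fun Q ↦ and_congr_right fun hQ ↦ maxRatio_le_ofReal_iff (hT Q hQ) hQ hμ

theorem congruence_congruence {k m n R : Type*} [Fintype k] [Fintype m] [NonUnitalSemiring R]
    [StarRing R] (A : Matrix k m R) (B : Matrix m n R) (Q : Matrix k k R) :
    Bᴴ * (Aᴴ * Q * A) * B = (A * B)ᴴ * Q * (A * B) := by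
  simp only [conjTranspose_mul, Matrix.mul_assoc]

section

variable {n 𝕜 : Type*} [Fintype n] [DecidableEq n] [RCLike 𝕜]

/-- For invertible `L`, the congruence `Q ↦ L* Q L` as a permutation of the positive definite
matrices. -/
def posDefCongruence (L : Matrix n n 𝕜) (hL : IsUnit L) :
    {Q : Matrix n n 𝕜 // Q.PosDef} ≃ {Q : Matrix n n 𝕜 // Q.PosDef} where
  toFun Q := ⟨Lᴴ * Q.1 * L, Q.2.conjTranspose_mul_mul_same (mulVec_injective_of_isUnit hL)⟩
  invFun Q := ⟨L⁻¹ᴴ * Q.1 * L⁻¹, Q.2.conjTranspose_mul_mul_same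
    (mulVec_injective_of_isUnit (isUnit_nonsing_inv_iff.2 hL))⟩
  left_inv Q := Subtype.ext <| by
    simp [congruence_congruence, mul_nonsing_inv L ((isUnit_iff_isUnit_det L).1 hL)]
  right_inv Q := Subtype.ext <| by
    simp [congruence_congruence, nonsing_inv_mul L ((isUnit_iff_isUnit_det L).1 hL)]

/-- The constant `P` of a congruence by `L` against a map `V` that need not be linear:
`sup_{Q ≻ 0} inf_{v ≠ 0} (v* L* Q L v) / (v* V[Q] v)`. -/
def supMinRatio (L : Matrix n n 𝕜) (V : Matrix n n 𝕜 → Matrix n n 𝕜) : ℝ≥0∞ :=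
  ⨆ Q : {Q : Matrix n n 𝕜 // Q.PosDef}, minRatio (Lᴴ * Q.1 * L) (V Q.1)

theorem inv_supMinRatio {L : Matrix n n 𝕜} (hL : IsUnit L) (V : Matrix n n 𝕜 → Matrix n n 𝕜) :
    (supMinRatio L V)⁻¹ =
      ⨅ Q : {Q : Matrix n n 𝕜 // Q.PosDef}, maxRatio (V (L⁻¹ᴴ * Q.1 * L⁻¹)) Q.1 := by
  rw [supMinRatio, ENNReal.inv_iSup]
  refine (posDefCongruence L hL).iInf_congr fun Q ↦ ?_
  have hV : V (L⁻¹ᴴ * (posDefCongruence L hL Q).1 * L⁻¹) = V Q.1 :=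
    congrArg (V ·.1) ((posDefCongruence L hL).symm_apply_apply Q)
  rw [hV]
  exact (inv_minRatio (posDefCongruence L hL Q).2 _).symm

theorem stmt2_general {L : Matrix n n 𝕜} (hL : IsUnit L) {V : Matrix n n 𝕜 → Matrix n n 𝕜}
    (hV : ∀ Q, Q.PosDef → (V Q).PosSemidef) :
    (supMinRatio L V)⁻¹ =
      (⨅ Q : {Q : Matrix n n 𝕜 // Q.PosDef}, maxRatio (V (L⁻¹ᴴ * Q.1 * L⁻¹)) Q.1) ∧
    (supMinRatio L V)⁻¹ =
      sInf {x | ∃ μ : ℝ, 0 ≤ μ ∧ x = ENNReal.ofReal μ ∧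
        ∃ Q : Matrix n n 𝕜, Q.PosDef ∧ ((μ : 𝕜) • Q - V (L⁻¹ᴴ * Q * L⁻¹)).PosSemidef} := by
  have hS (Q : Matrix n n 𝕜) (hQ : Q.PosDef) : (V (L⁻¹ᴴ * Q * L⁻¹)).IsHermitian :=
    (hV _ ((posDefCongruence L hL).symm ⟨Q, hQ⟩).2).isHermitian
  have hinv := inv_supMinRatio hL V
  refine ⟨hinv, hinv.trans ?_⟩
  exact iInf_maxRatio_eq_sInf (T := fun Q ↦ V (L⁻¹ᴴ * Q * L⁻¹)) hS

end

/-- two characterizations of `1/P`: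
`1/P = inf_{Q ≻ 0} sup_{w ≠ 0} (w* 𝒮[Q] w)/(w* Q w)
     = inf{ μ ≥ 0 : ∃ Q ≻ 0 with 𝒮[Q] ⪯ μ·Q }`. -/
theorem stmt2 {N : ℕ} (hN : 0 < N) (L : Mat N) (hL : IsUnit L)
    (V : Mat N →ₗ[ℂ] Mat N)
    (hVherm : ∀ Q : Mat N, Q.IsHermitian → (V Q).IsHermitian)
    (hVpsd : ∀ Q : Mat N, Q.PosSemidef → (V Q).PosSemidef) :
    (Pval L V)⁻¹ =
      (⨅ Q : {Q : Mat N // Q.PosDef}, ⨆ w : {w : Fin N → ℂ // w ≠ 0},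
        ENNReal.ofReal (qf ((Smap L V) Q.1) w.1) / ENNReal.ofReal (qf Q.1 w.1)) ∧
    (Pval L V)⁻¹ =
      sInf {x : ℝ≥0∞ | ∃ μ : ℝ, 0 ≤ μ ∧ x = ENNReal.ofReal μ ∧
        ∃ Q : Mat N, Q.PosDef ∧ ((μ : ℂ) • Q - (Smap L V) Q).PosSemidef} :=
  stmt2_general hL fun Q hQ ↦ hVpsd Q hQ.posSemidef

end
end

section
/- The windowing function κ_w has total mass at the origin κ_w(0) = 1, is supported in [−1,1], and its Fourier transform is everywhere nonnegative; explicitly, for every ω ∈ ℝ with ω ≠ π and ω ≠ −π, ∫_ℝ κ_w(x) e^{−iωx} dx = 4π²(1 + cos ω)/(π² − ω²)² ≥ 0. -/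
open Real

noncomputable section

/-- The windowing function `κ_w`. -/
def κw (x : ℝ) : ℝ :=
  if |x| ≤ 1 then (1 / Real.pi) * Real.sin (Real.pi * |x|) + (1 - |x|) * Real.cos (Real.pi * x)
  else 0

/-! `κ_w` is the self-convolution of the even function `φ(x) = √2 cos(πx)` supported on
`[-1/2, 1/2]`. Hence its Fourier transform is the square of that of `φ`, which is real because `φ`
is even and equals `√2 cos(z/2) (1/(π - z) + 1/(π + z))`. -/

open MeasureTheory Set ContinuousLinearMap
open scoped Convolution ComplexConjugate ComplexOrder

section Convolution

variable {𝕜 G : Type*} [RCLike 𝕜] [AddCommGroup G] [MeasurableSpace G] {μ : Measure G}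

theorem convolution_ofReal (f g : G → ℝ) :
    (fun x => (f x : 𝕜)) ⋆[mul 𝕜 𝕜, μ] (fun x => (g x : 𝕜)) =
      fun x => ((f ⋆[mul ℝ ℝ, μ] g) x : 𝕜) := by
  funext x
  simp only [convolution_def, mul_apply', ← RCLike.ofReal_mul]
  exact integral_ofReal

theorem convolution_mul_addChar (χ : AddChar G 𝕜) (f g : G → 𝕜) :
    (fun x => f x * χ x) ⋆[mul 𝕜 𝕜, μ] (fun x => g x * χ x) =
      fun x => (f ⋆[mul 𝕜 𝕜, μ] g) x * χ x := by
  funext x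
  simp only [convolution_def, mul_apply', ← integral_mul_const]
  congr 1 with t
  calc f t * χ t * (g (x - t) * χ (x - t))
      = f t * g (x - t) * (χ t * χ (x - t)) := by ring
    _ = f t * g (x - t) * χ x := by rw [← χ.map_add_eq_mul, add_sub_cancel]

theorem integral_convolution_mul_addChar [MeasurableAdd₂ G] [MeasurableNeg G] [SFinite μ]
    [μ.IsAddRightInvariant] (χ : AddChar G 𝕜) {f g : G → 𝕜}
    (hf : Integrable (fun x => f x * χ x) μ) (hg : Integrable (fun x => g x * χ x) μ) :
    ∫ x, (f ⋆[mul 𝕜 𝕜, μ] g) x * χ x ∂μ = (∫ x, f x * χ x ∂μ) * ∫ x, g x * χ x ∂μ := by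
  simpa only [convolution_mul_addChar, mul_apply'] using integral_convolution (mul 𝕜 𝕜) hf hg

end Convolution

/-- The character `x ↦ e^{-izx}` of `ℝ` with complex frequency `z`, against which the
Fourier–Laplace transform is taken. -/
def expChar (z : ℂ) : AddChar ℝ ℂ where
  toFun x := Complex.exp (-(Complex.I * z * x))
  map_zero_eq_one' := by simp
  map_add_eq_mul' x y := by rw [← Complex.exp_add]; push_cast; ring_nf

theorem expChar_apply (z : ℂ) (x : ℝ) : expChar z x = Complex.exp (-(Complex.I * z * x)) := rfl

theorem continuous_expChar (z : ℂ) : Continuous (expChar z) := by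
  change Continuous fun x : ℝ => Complex.exp (-(Complex.I * z * x))
  fun_prop

theorem conj_expChar (ω x : ℝ) : conj (expChar ω x) = expChar ω (-x) := by
  simp [expChar_apply, ← Complex.exp_conj]

theorem conj_integral_mul_expChar_of_even {f : ℝ → ℝ} (hf : f.Even) (ω : ℝ) :
    conj (∫ x, (f x : ℂ) * expChar ω x) = ∫ x, (f x : ℂ) * expChar ω x := by
  rw [← integral_conj, ← integral_neg_eq_self]
  simp only [map_mul, Complex.conj_ofReal, conj_expChar, neg_neg, hf _]

theorem integral_exp_I_mul_symm {w : ℂ} (hw : w ≠ 0) (a : ℝ) :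
    ∫ x in -a..a, Complex.exp (Complex.I * w * x) = 2 * Complex.sin (w * a) / w := by
  rw [integral_exp_mul_complex (mul_ne_zero Complex.I_ne_zero hw), Complex.sin]
  push_cast
  field_simp
  simp only [Complex.I_sq]
  ring_nf

theorem cos_mul_expChar (a z : ℂ) (x : ℝ) :
    Complex.cos (a * x) * expChar z x =
      (Complex.exp (Complex.I * (a - z) * x) + Complex.exp (Complex.I * (-(a + z)) * x)) / 2 := by
  rw [expChar_apply, Complex.cos, div_mul_eq_mul_div, add_mul, ← Complex.exp_add,
    ← Complex.exp_add]
  ring_nf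

/-- The half-period cosine window `φ`, the convolution square root of `κ_w`. The factor `√2` makes
its `L²` norm equal to `1 = κ_w(0)`. -/
def cosWindow : ℝ → ℝ :=
  (Icc (-(1 / 2)) (1 / 2)).indicator fun x => √2 * cos (π * x)

theorem cosWindow_even : cosWindow.Even := fun x => by
  have : -x ∈ Icc (-(1 / 2) : ℝ) (1 / 2) ↔ x ∈ Icc (-(1 / 2) : ℝ) (1 / 2) := by
    rw [← mem_neg, neg_Icc, neg_neg]
  simp only [cosWindow, indicator, this, mul_neg, cos_neg]

theorem κw_even : κw.Even := fun x => by simp only [κw, abs_neg, mul_neg, cos_neg]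

theorem cosWindow_mul_cosWindow_sub {x : ℝ} (hx : 0 ≤ x) (t : ℝ) :
    cosWindow t * cosWindow (x - t) =
      (Icc (x - 1 / 2) (1 / 2)).indicator (fun t => cos (2 * π * t - π * x) + cos (π * x)) t := by
  have mem_iff : t ∈ Icc (x - 1 / 2) (1 / 2) ↔
      t ∈ Icc (-(1 / 2) : ℝ) (1 / 2) ∧ x - t ∈ Icc (-(1 / 2) : ℝ) (1 / 2) := by
    simp only [mem_Icc]
    grind
  have product_to_sum : √2 * cos (π * t) * (√2 * cos (π * (x - t))) =
      cos (2 * π * t - π * x) + cos (π * x) := by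
    calc √2 * cos (π * t) * (√2 * cos (π * (x - t)))
        = √2 ^ 2 * cos (π * t) * cos (π * (x - t)) := by ring
      _ = cos (2 * π * t - π * x) + cos (π * x) := by
        rw [sq_sqrt zero_le_two, two_mul_cos_mul_cos]
        ring_nf
  simp only [cosWindow, indicator, mem_iff, ← product_to_sum]
  grind

theorem integral_cos_add_cos (x : ℝ) :
    ∫ t in (x - 1 / 2)..(1 / 2), (cos (2 * π * t - π * x) + cos (π * x)) =
      1 / π * sin (π * x) + (1 - x) * cos (π * x) := by
  have oscillating : ∫ t in (x - 1 / 2)..(1 / 2), cos (2 * π * t - π * x) =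
      1 / π * sin (π * x) := by
    rw [intervalIntegral.integral_comp_mul_sub _ two_pi_pos.ne', integral_cos,
      show 2 * π * (1 / 2) - π * x = π - π * x by ring,
      show 2 * π * (x - 1 / 2) - π * x = -(π - π * x) by ring, sin_neg, sin_pi_sub, smul_eq_mul]
    field_simp
    ring
  rw [intervalIntegral.integral_add (Continuous.intervalIntegrable (by fun_prop) _ _)
    intervalIntegrable_const, oscillating, intervalIntegral.integral_const, smul_eq_mul]
  ring

theorem cosWindow_convolution_self_of_nonneg {x : ℝ} (hx : 0 ≤ x) :
    (cosWindow ⋆[mul ℝ ℝ] cosWindow) x = κw x := by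
  simp only [convolution_def, mul_apply', cosWindow_mul_cosWindow_sub hx]
  rw [integral_indicator measurableSet_Icc]
  rcases le_or_gt x 1 with hx1 | hx1
  · rw [integral_Icc_eq_integral_Ioc, ← intervalIntegral.integral_of_le (by linarith),
      integral_cos_add_cos, κw, abs_of_nonneg hx, if_pos hx1]
  · rw [Icc_eq_empty (by linarith), setIntegral_empty, κw, abs_of_nonneg hx, if_neg hx1.not_ge]

theorem cosWindow_convolution_self : cosWindow ⋆[mul ℝ ℝ] cosWindow = κw := by
  funext x
  rcases le_total 0 x with hx | hx
  · exact cosWindow_convolution_self_of_nonneg hx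
  · rw [← convolution_neg_of_neg_eq _ (.of_forall cosWindow_even) (.of_forall cosWindow_even),
      cosWindow_convolution_self_of_nonneg (neg_nonneg.mpr hx), κw_even]

theorem cosWindow_mul_expChar (z : ℂ) (x : ℝ) :
    (cosWindow x : ℂ) * expChar z x =
      (Icc (-(1 / 2)) (1 / 2)).indicator
        (fun x : ℝ => √2 * (Complex.cos (π * x) * expChar z x)) x := by
  simp only [cosWindow, indicator]
  split_ifs <;> push_cast <;> ring

theorem integrable_cosWindow_mul_expChar (z : ℂ) :
    Integrable fun x => (cosWindow x : ℂ) * expChar z x := by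
  have := continuous_expChar z
  simp only [cosWindow_mul_expChar]
  exact (Continuous.integrableOn_Icc (by fun_prop)).integrable_indicator measurableSet_Icc

theorem integral_cosWindow_mul_expChar {z : ℂ} (h₁ : z ≠ π) (h₂ : z ≠ -π) :
    ∫ x, (cosWindow x : ℂ) * expChar z x =
      √2 * (2 * π * Complex.cos (z / 2) / (π ^ 2 - z ^ 2)) := by
  have hsub : (π : ℂ) - z ≠ 0 := sub_ne_zero.mpr h₁.symm
  have hadd : (π : ℂ) + z ≠ 0 := fun h => h₂ (eq_neg_of_add_eq_zero_right h)
  have hsin_sub : Complex.sin ((π - z) * (1 / 2 : ℝ)) = Complex.cos (z / 2) := by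
    rw [← Complex.sin_pi_div_two_sub]
    push_cast
    ring_nf
  have hsin_add : Complex.sin (-(π + z) * (1 / 2 : ℝ)) = -Complex.cos (z / 2) := by
    rw [← Complex.cos_neg, ← Complex.sin_pi_div_two_sub, ← Complex.sin_neg]
    push_cast
    ring_nf
  calc ∫ x, (cosWindow x : ℂ) * expChar z x
      = √2 * ∫ x : ℝ in -(1 / 2)..(1 / 2), Complex.cos (π * x) * expChar z x := by
        simp only [cosWindow_mul_expChar]
        rw [integral_indicator measurableSet_Icc, integral_Icc_eq_integral_Ioc,
          ← intervalIntegral.integral_of_le (by norm_num), intervalIntegral.integral_const_mul]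
    _ = √2 * (Complex.cos (z / 2) / (π - z) + Complex.cos (z / 2) / (π + z)) := by
        simp only [cos_mul_expChar]
        rw [intervalIntegral.integral_div, intervalIntegral.integral_add
            (Continuous.intervalIntegrable (by fun_prop) _ _)
            (Continuous.intervalIntegrable (by fun_prop) _ _),
          integral_exp_I_mul_symm hsub, integral_exp_I_mul_symm (neg_ne_zero.mpr hadd),
          hsin_sub, hsin_add]
        field_simp
    _ = √2 * (2 * π * Complex.cos (z / 2) / (π ^ 2 - z ^ 2)) := by
        rw [sq_sub_sq]
        field_simp
        ring

theorem integral_κw_mul_expChar_eq_sq (z : ℂ) :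
    ∫ x, (κw x : ℂ) * expChar z x = (∫ x, (cosWindow x : ℂ) * expChar z x) ^ 2 := by
  rw [sq, ← integral_convolution_mul_addChar _ (integrable_cosWindow_mul_expChar z)
    (integrable_cosWindow_mul_expChar z)]
  simp only [← cosWindow_convolution_self]
  exact congrArg (fun h : ℝ → ℂ => ∫ x, h x * expChar z x)
    (convolution_ofReal cosWindow cosWindow).symm

theorem integral_κw_mul_expChar {z : ℂ} (h₁ : z ≠ π) (h₂ : z ≠ -π) :
    ∫ x, (κw x : ℂ) * expChar z x = 4 * π ^ 2 * (1 + Complex.cos z) / (π ^ 2 - z ^ 2) ^ 2 := by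
  have sqrt_two_sq : (√2 : ℂ) ^ 2 = 2 := mod_cast sq_sqrt (zero_le_two (α := ℝ))
  have half_angle : 2 * Complex.cos (z / 2) ^ 2 = 1 + Complex.cos z := by
    rw [Complex.cos_sq]
    ring_nf
  rw [integral_κw_mul_expChar_eq_sq, integral_cosWindow_mul_expChar h₁ h₂, mul_pow, div_pow,
    sqrt_two_sq, ← half_angle]
  ring

theorem integral_κw_mul_expChar_nonneg (ω : ℝ) : 0 ≤ ∫ x, (κw x : ℂ) * expChar ω x := by
  rw [integral_κw_mul_expChar_eq_sq, sq]
  exact IsSelfAdjoint.mul_self_nonneg (conj_integral_mul_expChar_of_even cosWindow_even ω)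

theorem stmt6_general :
    κw 0 = 1 ∧
    (∀ x : ℝ, 1 < |x| → κw x = 0) ∧
    (∀ z : ℂ, z ≠ π → z ≠ -π →
      ∫ x : ℝ, (κw x : ℂ) * Complex.exp (-(Complex.I * z * x)) =
        4 * π ^ 2 * (1 + Complex.cos z) / (π ^ 2 - z ^ 2) ^ 2) ∧
    ∀ ω : ℝ, 0 ≤ ∫ x : ℝ, (κw x : ℂ) * Complex.exp (-(Complex.I * ω * x)) :=
  ⟨by simp [κw], fun _ hx => if_neg hx.not_ge, fun _ => integral_κw_mul_expChar,
    integral_κw_mul_expChar_nonneg⟩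

/-- `κ_w(0) = 1`, `κ_w` is supported in `[−1,1]`, and its Fourier transform is
everywhere nonnegative: for `ω ≠ ±π`,
`∫ κ_w(x) e^{−iωx} dx = 4π²(1 + cos ω)/(π² − ω²)² ≥ 0`. -/
theorem stmt6 :
    κw 0 = 1 ∧
    (∀ x : ℝ, 1 < |x| → κw x = 0) ∧
    ∀ ω : ℝ, ω ≠ Real.pi → ω ≠ -Real.pi →
      (∫ x : ℝ, (κw x : ℂ) * Complex.exp (-(Complex.I * (ω : ℂ) * (x : ℂ))))
          = ((4 * Real.pi ^ 2 * (1 + Real.cos ω) / (Real.pi ^ 2 - ω ^ 2) ^ 2 : ℝ) : ℂ) ∧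
        0 ≤ 4 * Real.pi ^ 2 * (1 + Real.cos ω) / (Real.pi ^ 2 - ω ^ 2) ^ 2 := by
  obtain ⟨h_zero, h_supp, h_eq, h_nonneg⟩ := stmt6_general
  refine ⟨h_zero, h_supp, fun ω h₁ h₂ => ?_⟩
  have h := h_eq ω (mod_cast h₁) (mod_cast h₂)
  norm_cast at h
  exact ⟨h, Complex.zero_le_real.mp (h ▸ h_nonneg ω)⟩

end
end

section
/- Let U ⊆ ℂ be open, let A, B : U → M_N be analytic, and let D̄ ⊆ U be a closed disk with boundary circle ∂D and open interior D. Suppose that for every λ ∈ ∂D the matrix A(λ) is invertible and there exists a Hermitian positive definite Q ∈ M_N with ‖A(λ)⁻¹(B(λ) − A(λ))‖_Q < 1. Then det∘A and det∘B have no zeros on ∂D, each has only finitely many zeros in D, and the number of zeros of det∘A in D counted with multiplicity (i.e. the sum over z ∈ D of the order of vanishing of det∘A at z) equals the corresponding count for det∘B. -/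
open Matrix ComplexOrder ENNReal Metric

noncomputable section

/-- The norm `‖v‖_Q = (v* Q v)^{1/2}`. -/
def qnorm {N : ℕ} (Q : Mat N) (v : Fin N → ℂ) : ℝ := Real.sqrt (qf Q v)

/-- The operator norm on matrices induced by `‖·‖_Q`. -/
def opNormQ {N : ℕ} (Q M : Mat N) : ℝ :=
  sSup {r : ℝ | ∃ v : Fin N → ℂ, v ≠ 0 ∧ r = qnorm Q (M *ᵥ v) / qnorm Q v}

/-- Order of vanishing of `f` at `z`: the least `n` with `f⁽ⁿ⁾(z) ≠ 0`. -/
def vanishOrder (f : ℂ → ℂ) (z : ℂ) : ℕ := sInf {n : ℕ | iteratedDeriv n f z ≠ 0}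

/-
By the argument principle, the number of zeros of an analytic `f` in the disk, counted with
multiplicity, is `(2πi)⁻¹ ∮ f'/f` over its boundary. If `‖f - g‖ < ‖g‖` on the circle, then
`log (f/g)` is a primitive of `f'/f - g'/g` there, so both integrals agree; hence the integral is
locally constant along a homotopy of functions without zeros on the circle. The homotopy used here
is `t ↦ det (A + t (B - A)) = det A · det (1 + t A⁻¹ (B - A))`, `0 ≤ t ≤ 1`: its last factor does
not vanish, since `t A⁻¹ (B - A)` is a strict contraction for some `‖·‖_Q`.
-/

section Matrix

theorem analyticAt_det {𝕜 E n : Type*} [NontriviallyNormedField 𝕜] [NormedAddCommGroup E]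
    [NormedSpace 𝕜 E] [Fintype n] [DecidableEq n] {A : E → Matrix n n 𝕜} {x : E}
    (hA : ∀ i j, AnalyticAt 𝕜 (fun y ↦ A y i j) x) : AnalyticAt 𝕜 (fun y ↦ (A y).det) x := by
  simp only [det_apply']
  exact Finset.analyticAt_fun_sum _ fun σ _ ↦
    analyticAt_const.fun_mul (Finset.analyticAt_fun_prod _ fun i _ ↦ hA (σ i) i)

theorem analyticAt_det_add_smul_sub {𝕜 E n : Type*} [NontriviallyNormedField 𝕜]
    [NormedAddCommGroup E] [NormedSpace 𝕜 E] [Fintype n] [DecidableEq n] {A B : E → Matrix n n 𝕜}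
    {x : E} (hA : ∀ i j, AnalyticAt 𝕜 (fun y ↦ A y i j) x)
    (hB : ∀ i j, AnalyticAt 𝕜 (fun y ↦ B y i j) x) (t : 𝕜) :
    AnalyticAt 𝕜 (fun p : 𝕜 × E ↦ det (A p.2 + p.1 • (B p.2 - A p.2))) (t, x) := by
  refine analyticAt_det fun i j ↦ ?_
  have hA' := (hA i j).comp_of_eq (analyticAt_snd (p := (t, x))) rfl
  have hB' := (hB i j).comp_of_eq (analyticAt_snd (p := (t, x))) rfl
  exact hA'.fun_add (analyticAt_fst.fun_mul (hB'.fun_sub hA'))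

end Matrix

section QNorm

variable {N : ℕ} {Q : Mat N}

theorem qnorm_conjTranspose_mul_self (S : Mat N) (v : Fin N → ℂ) :
    qnorm (Sᴴ * S) v = ‖WithLp.toLp 2 (S *ᵥ v)‖ := by
  rw [norm_eq_sqrt_re_inner (𝕜 := ℂ), EuclideanSpace.inner_toLp_toLp, dotProduct_comm, star_mulVec,
    ← dotProduct_mulVec, mulVec_mulVec]
  rfl

open scoped MatrixOrder Matrix.Norms.L2Operator in
theorem exists_isUnit_qnorm_eq_norm (hQ : Q.PosDef) :
    ∃ S : Mat N, IsUnit S ∧ ∀ v, qnorm Q v = ‖WithLp.toLp 2 (S *ᵥ v)‖ := by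
  obtain ⟨S, hS, rfl⟩ :=
    CStarAlgebra.isStrictlyPositive_iff_eq_star_mul_self.1 hQ.isStrictlyPositive
  exact ⟨S, hS, qnorm_conjTranspose_mul_self S⟩

theorem qnorm_pos (hQ : Q.PosDef) {v : Fin N → ℂ} (hv : v ≠ 0) : 0 < qnorm Q v :=
  Real.sqrt_pos.2 (Complex.pos_iff.1 (hQ.dotProduct_mulVec_pos hv)).1

theorem qnorm_smul (Q : Mat N) (c : ℂ) (v : Fin N → ℂ) : qnorm Q (c • v) = ‖c‖ * qnorm Q v := by
  have hqf : qf Q (c • v) = ‖c‖ ^ 2 * qf Q v := by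
    rw [qf, star_smul, mulVec_smul, smul_dotProduct, dotProduct_smul, smul_smul,
      ← starRingEnd_apply, Complex.conj_mul', ← Complex.ofReal_pow, Complex.coe_smul,
      Complex.smul_re, smul_eq_mul, qf]
  rw [qnorm, hqf, Real.sqrt_mul (sq_nonneg _), Real.sqrt_sq (norm_nonneg c), qnorm]

theorem exists_qnorm_mulVec_le (hQ : Q.PosDef) (M : Mat N) :
    ∃ C, ∀ v, qnorm Q (M *ᵥ v) ≤ C * qnorm Q v := by
  obtain ⟨S, hS, hQS⟩ := exists_isUnit_qnorm_eq_norm hQ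
  refine ⟨‖toEuclideanCLM (𝕜 := ℂ) (S * M * S⁻¹)‖, fun v ↦ ?_⟩
  have hconj : S *ᵥ (M *ᵥ v) = (S * M * S⁻¹) *ᵥ (S *ᵥ v) := by
    rw [mulVec_mulVec, mulVec_mulVec,
      nonsing_inv_mul_cancel_right _ _ ((isUnit_iff_isUnit_det S).1 hS)]
  rw [hQS, hQS, hconj, ← toEuclideanCLM_toLp]
  exact ContinuousLinearMap.le_opNorm _ _

theorem qnorm_mulVec_le_opNormQ_mul_qnorm (hQ : Q.PosDef) (M : Mat N) (v : Fin N → ℂ) :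
    qnorm Q (M *ᵥ v) ≤ opNormQ Q M * qnorm Q v := by
  obtain ⟨C, hC⟩ := exists_qnorm_mulVec_le hQ M
  rcases eq_or_ne v 0 with rfl | hv
  · simp [qnorm, qf]
  rw [← div_le_iff₀ (qnorm_pos hQ hv)]
  refine le_csSup ⟨C, ?_⟩ ⟨v, hv, rfl⟩
  rintro _ ⟨w, hw, rfl⟩
  exact (div_le_iff₀ (qnorm_pos hQ hw)).2 (hC w)

theorem det_one_add_smul_ne_zero {M : Mat N} (hQ : Q.PosDef) (hM : opNormQ Q M < 1) {t : ℂ}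
    (ht : ‖t‖ ≤ 1) : det (1 + t • M) ≠ 0 := by
  intro hdet
  obtain ⟨v, hv, hker⟩ := exists_mulVec_eq_zero_iff.2 hdet
  have hfix : v = -t • (M *ᵥ v) := by
    rwa [add_mulVec, one_mulVec, smul_mulVec, add_eq_zero_iff_eq_neg, ← neg_smul] at hker
  refine lt_irrefl (qnorm Q v) ?_
  calc qnorm Q v = ‖t‖ * qnorm Q (M *ᵥ v) := by
        conv_lhs => rw [hfix, qnorm_smul, norm_neg]
    _ ≤ qnorm Q (M *ᵥ v) := mul_le_of_le_one_left (Real.sqrt_nonneg _) ht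
    _ ≤ opNormQ Q M * qnorm Q v := qnorm_mulVec_le_opNormQ_mul_qnorm hQ M v
    _ < qnorm Q v := mul_lt_of_lt_one_left (qnorm_pos hQ hv) hM

theorem det_add_smul_sub_ne_zero {A B : Mat N} (hA : IsUnit A) (hQ : Q.PosDef)
    (hAB : opNormQ Q (A⁻¹ * (B - A)) < 1) {t : ℂ} (ht : ‖t‖ ≤ 1) :
    det (A + t • (B - A)) ≠ 0 := by
  have hdetA : IsUnit A.det := (isUnit_iff_isUnit_det A).1 hA
  have hfactor : A + t • (B - A) = A * (1 + t • (A⁻¹ * (B - A))) := by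
    rw [mul_add, mul_one, mul_smul_comm, mul_nonsing_inv_cancel_left _ _ hdetA]
  rw [hfactor, det_mul]
  exact mul_ne_zero hdetA.ne_zero (det_one_add_smul_ne_zero hQ hAB ht)

end QNorm

section ArgumentPrinciple

open Filter Topology MeromorphicOn

section LogDeriv

variable {𝕜 : Type*} [NontriviallyNormedField 𝕜]

theorem analyticAt_logDeriv {𝕜' : Type*} [NontriviallyNormedField 𝕜'] [NormedAlgebra 𝕜 𝕜']
    [CompleteSpace 𝕜'] {f : 𝕜 → 𝕜'} {z : 𝕜} (hf : AnalyticAt 𝕜 f z) (hz : f z ≠ 0) :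
    AnalyticAt 𝕜 (logDeriv f) z :=
  hf.deriv.div hf hz

variable {U : Set 𝕜} {f g : 𝕜 → 𝕜}

theorem logDeriv_eventuallyEq_codiscreteWithin (hU : Preperfect U)
    (hf : MeromorphicOn f U) (hg : MeromorphicOn g U) (h : f =ᶠ[codiscreteWithin U] g) :
    logDeriv f =ᶠ[codiscreteWithin U] logDeriv g := by
  refine mem_codiscreteWithin_iff_forall_mem_nhdsNE.2 fun z hz ↦ ?_
  have hfg : f =ᶠ[𝓝[≠] z] g :=
    (hf z hz).eventuallyEq_nhdsNE_of_eventuallyEq_codiscreteWithin_preperfect (hg z hz) hz hU h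
  exact mem_of_superset (logDeriv_congr_nhdsNE hfg) Set.subset_union_left

theorem logDeriv_finprod_sub_zpow_eventuallyEq {d : 𝕜 → ℤ} (hd : d.support.Finite) :
    logDeriv (∏ᶠ u, (· - u) ^ d u) =ᶠ[codiscreteWithin U]
      fun z ↦ ∑ u ∈ hd.toFinset, (d u : 𝕜) * (z - u)⁻¹ := by
  have hmer (u : 𝕜) : MeromorphicOn (· - u) U := fun z _ ↦ by fun_prop
  have hord (u : 𝕜) : ∀ z ∈ U, meromorphicOrderAt (· - u) z ≠ ⊤ := fun z hz ↦
    (meromorphicOrderAt_ne_top_iff_eventually_ne_zero (hmer u z hz)).2 <| by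
      filter_upwards [nhdsNE_le_cofinite z (Set.finite_singleton u).compl_mem_cofinite] with w hw
      exact sub_ne_zero.2 hw
  filter_upwards [logDeriv_finprod_zpow_eventuallyEq hd hmer hord] with z hz
  rw [hz, finsum_eq_sum_of_support_subset (s := hd.toFinset)]
  · simp [logDeriv_apply]
  · intro u
    contrapose
    simp +contextual

theorem exists_analyticOnNhd_logDeriv_eventuallyEq (hU : Preperfect U)
    (hf : MeromorphicOn f U) (hord : ∀ z ∈ U, meromorphicOrderAt f z ≠ ⊤)
    (hfin : (divisor f U).support.Finite) :
    ∃ g : 𝕜 → 𝕜, AnalyticOnNhd 𝕜 g U ∧ (∀ z ∈ U, g z ≠ 0) ∧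
      logDeriv f =ᶠ[codiscreteWithin U] fun z ↦
        ∑ u ∈ hfin.toFinset, (divisor f U u : 𝕜) * (z - u)⁻¹ + logDeriv g z := by
  obtain ⟨g, hg, hg0, hfg⟩ := hf.extract_zeros_poles (fun u ↦ hord u u.2) hfin
  refine ⟨g, hg, fun z hz ↦ hg0 ⟨z, hz⟩, ?_⟩
  have hP : MeromorphicOn (∏ᶠ u, (· - u) ^ divisor f U u) U :=
    (Function.FactorizedRational.meromorphicNFOn (divisor f U) U).meromorphicOn
  have hgord (z) (hz : z ∈ U) : meromorphicOrderAt g z ≠ ⊤ := by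
    simp [(hg z hz).meromorphicOrderAt_eq, (hg z hz).analyticOrderAt_eq_zero.2 (hg0 ⟨z, hz⟩)]
  calc logDeriv f
      =ᶠ[codiscreteWithin U] logDeriv ((∏ᶠ u, (· - u) ^ divisor f U u) * g) :=
        logDeriv_eventuallyEq_codiscreteWithin hU hf (hP.mul hg.meromorphicOn) hfg
    _ =ᶠ[codiscreteWithin U] logDeriv (∏ᶠ u, (· - u) ^ divisor f U u) + logDeriv g :=
        hP.logDeriv_mul_eventuallyEq hg.meromorphicOn
          (fun z _ ↦ Function.FactorizedRational.meromorphicOrderAt_ne_top _) hgord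
    _ =ᶠ[codiscreteWithin U] _ := (logDeriv_finprod_sub_zpow_eventuallyEq hfin).add .rfl

end LogDeriv

variable {f : ℂ → ℂ} {c : ℂ} {R : ℝ}

theorem circleIntegrable_logDeriv (hR : 0 ≤ R) (hf : AnalyticOnNhd ℂ f (sphere c R))
    (h : ∀ z ∈ sphere c R, f z ≠ 0) : CircleIntegrable (logDeriv f) c R :=
  ContinuousOn.circleIntegrable hR fun z hz ↦
    (analyticAt_logDeriv (hf z hz) (h z hz)).continuousAt.continuousWithinAt

theorem circleIntegral_logDeriv_eq_zero (hR : 0 ≤ R) (hf : AnalyticOnNhd ℂ f (closedBall c R))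
    (h : ∀ z ∈ closedBall c R, f z ≠ 0) : (∮ z in C(c, R), logDeriv f z) = 0 :=
  have hlog : AnalyticOnNhd ℂ (logDeriv f) (closedBall c R) := fun z hz ↦
    analyticAt_logDeriv (hf z hz) (h z hz)
  (hlog.differentiableOn.diffContOnCl_ball subset_rfl).circleIntegral_eq_zero hR

theorem circleIntegrable_const_mul_sub_inv (a : ℂ) {u : ℂ} (hu : u ∈ ball c R) :
    CircleIntegrable (fun z ↦ a * (z - u)⁻¹) c R :=
  ContinuousOn.circleIntegrable (pos_of_mem_ball hu).le <| continuousOn_const.mul <|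
    (continuousOn_id.sub continuousOn_const).inv₀ fun _ hz ↦
      sub_ne_zero.2 (sphere_disjoint_ball.ne_of_mem hz hu)

theorem circleIntegral_sum_mul_sub_inv {s : Finset ℂ} (hs : ↑s ⊆ ball c R) (a : ℂ → ℂ) :
    (∮ z in C(c, R), ∑ u ∈ s, a u * (z - u)⁻¹) = 2 * Real.pi * Complex.I * ∑ u ∈ s, a u := by
  rw [circleIntegral.integral_fun_sum
    fun u hu ↦ circleIntegrable_const_mul_sub_inv (a u) (hs hu), Finset.mul_sum]
  refine Finset.sum_congr rfl fun u hu ↦ ?_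
  rw [circleIntegral.integral_const_mul, circleIntegral.integral_sub_inv_of_mem_ball (hs hu),
    mul_comm]

theorem preperfect_closedBall {E : Type*} [NormedAddCommGroup E] [NormedSpace ℝ E] [Nontrivial E]
    (x : E) (hR : 0 < R) : Preperfect (closedBall x R) := by
  obtain ⟨w, hw⟩ : (sphere x R).Nonempty := NormedSpace.sphere_nonempty.2 hR.le
  exact (convex_closedBall x R).isPreconnected.preperfect_of_nontrivial
    ⟨x, mem_closedBall_self hR.le, w, sphere_subset_closedBall hw,
      (ne_of_mem_sphere hw hR.ne').symm⟩

theorem support_divisor_closedBall_subset_ball (hf : MeromorphicOn f (closedBall c R))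
    (hord : ∀ z ∈ sphere c R, meromorphicOrderAt f z = 0) :
    (divisor f (closedBall c R)).support ⊆ ball c R := by
  intro u hu
  have hu' : u ∈ closedBall c R := (divisor f (closedBall c R)).supportWithinDomain hu
  refine (mem_closedBall.1 hu').lt_of_ne fun hsph ↦ hu ?_
  rw [divisor_apply hf hu', hord u hsph, WithTop.untop₀_zero]

theorem circleIntegral_logDeriv_eq_finsum_divisor (hR : 0 < R)
    (hf : MeromorphicOn f (closedBall c R)) (hord : ∀ z ∈ sphere c R, meromorphicOrderAt f z = 0) :
    (∮ z in C(c, R), logDeriv f z) =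
      2 * Real.pi * Complex.I * (∑ᶠ u, divisor f (closedBall c R) u : ℤ) := by
  set D := divisor f (closedBall c R)
  have hfin : D.support.Finite := D.finiteSupport (isCompact_closedBall c R)
  have hball : ↑hfin.toFinset ⊆ ball c R :=
    hfin.coe_toFinset.trans_subset (support_divisor_closedBall_subset_ball hf hord)
  have hord' : ∀ z ∈ closedBall c R, meromorphicOrderAt f z ≠ ⊤ := fun z hz ↦ by
    obtain ⟨w, hw⟩ : (sphere c R).Nonempty := NormedSpace.sphere_nonempty.2 hR.le
    exact hf.meromorphicOrderAt_ne_top_of_isPreconnected (convex_closedBall c R).isPreconnected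
      (sphere_subset_closedBall hw) hz (by simp [hord w hw])
  obtain ⟨g, hg, hg0, hfg⟩ :=
    exists_analyticOnNhd_logDeriv_eventuallyEq (preperfect_closedBall c hR) hf hord' hfin
  have hfg' : logDeriv f =ᶠ[codiscreteWithin (sphere c |R|)] _ :=
    hfg.filter_mono (codiscreteWithin_mono (by rw [abs_of_pos hR]; exact sphere_subset_closedBall))
  calc (∮ z in C(c, R), logDeriv f z)
      = ∮ z in C(c, R), ∑ u ∈ hfin.toFinset, (D u : ℂ) * (z - u)⁻¹ + logDeriv g z :=
        circleIntegral.circleIntegral_congr_codiscreteWithin hfg' hR.ne'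
    _ = ∮ z in C(c, R), ∑ u ∈ hfin.toFinset, (D u : ℂ) * (z - u)⁻¹ := by
        rw [circleIntegral.integral_add, circleIntegral_logDeriv_eq_zero hR.le hg hg0, add_zero]
        · exact CircleIntegrable.fun_sum _ fun u hu ↦
            circleIntegrable_const_mul_sub_inv _ (hball hu)
        · exact circleIntegrable_logDeriv hR.le (hg.mono sphere_subset_closedBall)
            fun z hz ↦ hg0 z (sphere_subset_closedBall hz)
    _ = 2 * Real.pi * Complex.I * (∑ᶠ u, D u : ℤ) := by
        rw [circleIntegral_sum_mul_sub_inv hball, finsum_eq_sum _ hfin, Int.cast_sum]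

theorem vanishOrder_eq_analyticOrderNatAt {z : ℂ} (hf : AnalyticAt ℂ f z)
    (hord : analyticOrderAt f z ≠ ⊤) : vanishOrder f z = analyticOrderNatAt f z := by
  obtain ⟨hlt, hne⟩ := (analyticOrderAt_eq_nat_iff_iteratedDeriv_eq_zero hf).1
    (Nat.cast_analyticOrderNatAt hord).symm
  exact le_antisymm (Nat.sInf_le hne) <| le_csInf ⟨_, hne⟩ fun k hk ↦
    not_lt.1 fun hlt' ↦ hk (hlt k hlt')

theorem divisor_apply_eq_vanishOrder {U : Set ℂ} {z : ℂ} (hf : AnalyticOnNhd ℂ f U) (hz : z ∈ U)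
    (hord : analyticOrderAt f z ≠ ⊤) : divisor f U z = vanishOrder f z := by
  rw [hf.divisor_apply hz, vanishOrder_eq_analyticOrderNatAt (hf z hz) hord,
    ← Nat.cast_analyticOrderNatAt hord]
  rfl

theorem analyticOrderAt_ne_top_of_mem_closedBall (hR : 0 ≤ R)
    (hf : AnalyticOnNhd ℂ f (closedBall c R)) (h0 : ∀ z ∈ sphere c R, f z ≠ 0) {z : ℂ}
    (hz : z ∈ closedBall c R) :
    analyticOrderAt f z ≠ ⊤ := by
  obtain ⟨w, hw⟩ : (sphere c R).Nonempty := NormedSpace.sphere_nonempty.2 hR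
  refine hf.analyticOrderAt_ne_top_of_isPreconnected (convex_closedBall c R).isPreconnected
    (sphere_subset_closedBall hw) hz ?_
  rw [(hf w (sphere_subset_closedBall hw)).analyticOrderAt_eq_zero.2 (h0 w hw)]
  exact ENat.zero_ne_top

theorem support_divisor_closedBall (hR : 0 ≤ R) (hf : AnalyticOnNhd ℂ f (closedBall c R))
    (h0 : ∀ z ∈ sphere c R, f z ≠ 0) :
    Function.support (divisor f (closedBall c R)) = {z ∈ ball c R | f z = 0} := by
  rw [← hf.meromorphicNFOn.zero_set_eq_divisor_support fun u ↦ by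
    simpa [(hf u u.2).meromorphicOrderAt_eq] using
      analyticOrderAt_ne_top_of_mem_closedBall hR hf h0 u.2]
  ext z
  refine ⟨fun ⟨hz, hfz⟩ ↦ ⟨?_, hfz⟩, fun ⟨hz, hfz⟩ ↦ ⟨ball_subset_closedBall hz, hfz⟩⟩
  exact (mem_closedBall.1 hz).lt_of_ne fun hsph ↦ h0 z hsph hfz

theorem finite_zeros_ball (hR : 0 ≤ R) (hf : AnalyticOnNhd ℂ f (closedBall c R))
    (h0 : ∀ z ∈ sphere c R, f z ≠ 0) : {z ∈ ball c R | f z = 0}.Finite :=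
  support_divisor_closedBall hR hf h0 ▸
    (divisor f (closedBall c R)).finiteSupport (isCompact_closedBall c R)

theorem circleIntegral_logDeriv_eq_finsum_vanishOrder (hR : 0 < R)
    (hf : AnalyticOnNhd ℂ f (closedBall c R)) (h0 : ∀ z ∈ sphere c R, f z ≠ 0) :
    (∮ z in C(c, R), logDeriv f z) =
      2 * Real.pi * Complex.I * (∑ᶠ z ∈ {z ∈ ball c R | f z = 0}, vanishOrder f z : ℕ) := by
  have hord : ∀ z ∈ sphere c R, meromorphicOrderAt f z = 0 := fun z hz ↦ by
    have hfz := hf z (sphere_subset_closedBall hz)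
    rw [hfz.meromorphicOrderAt_eq, hfz.analyticOrderAt_eq_zero.2 (h0 z hz)]
    rfl
  have hcount : (∑ᶠ u, divisor f (closedBall c R) u) =
      (∑ᶠ z ∈ {z ∈ ball c R | f z = 0}, vanishOrder f z : ℕ) := by
    rw [← finsum_mem_support, support_divisor_closedBall hR.le hf h0,
      Nat.cast_finsum_mem (finite_zeros_ball hR.le hf h0)]
    refine finsum_mem_congr rfl fun z hz ↦ ?_
    have hzc := ball_subset_closedBall hz.1
    exact divisor_apply_eq_vanishOrder hf hzc
      (analyticOrderAt_ne_top_of_mem_closedBall hR.le hf h0 hzc)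
  rw [circleIntegral_logDeriv_eq_finsum_divisor hR hf.meromorphicOn hord, hcount, Int.cast_natCast]

end ArgumentPrinciple

section Homotopy

open Topology

variable {c : ℂ} {R : ℝ}

theorem circleIntegral_logDeriv_eq_of_norm_sub_lt {f g : ℂ → ℂ} (hR : 0 ≤ R)
    (hf : AnalyticOnNhd ℂ f (sphere c R)) (hg : AnalyticOnNhd ℂ g (sphere c R))
    (hfg : ∀ z ∈ sphere c R, ‖f z - g z‖ < ‖g z‖) :
    (∮ z in C(c, R), logDeriv f z) = ∮ z in C(c, R), logDeriv g z := by
  have hg0 : ∀ z ∈ sphere c R, g z ≠ 0 := fun z hz ↦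
    norm_pos_iff.1 ((norm_nonneg _).trans_lt (hfg z hz))
  have hf0 : ∀ z ∈ sphere c R, f z ≠ 0 := fun z hz hfz ↦ by
    simpa [hfz] using hfg z hz
  have hslit : ∀ z ∈ sphere c R, (f / g) z ∈ Complex.slitPlane := fun z hz ↦ by
    apply Complex.ball_one_subset_slitPlane
    rw [mem_ball, dist_eq_norm, Pi.div_apply, div_sub_one (hg0 z hz), norm_div,
      div_lt_one (norm_pos_iff.2 (hg0 z hz))]
    exact hfg z hz
  have hderiv : ∀ z ∈ sphere c R,
      HasDerivAt (fun w ↦ Complex.log ((f / g) w)) (logDeriv f z - logDeriv g z) z := fun z hz ↦ by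
    have hfz := (hf z hz).differentiableAt
    have hgz := (hg z hz).differentiableAt
    rw [← logDeriv_div z (hf0 z hz) (hg0 z hz) hfz hgz]
    exact (hfz.div hgz (hg0 z hz)).hasDerivAt.clog (hslit z hz)
  rw [← sub_eq_zero, ← circleIntegral.integral_sub (circleIntegrable_logDeriv hR hf hf0)
    (circleIntegrable_logDeriv hR hg hg0)]
  exact circleIntegral.integral_eq_zero_of_hasDerivWithinAt hR fun z hz ↦
    (hderiv z hz).hasDerivWithinAt

theorem eventually_forall_norm_sub_lt_norm {X Y E : Type*} [TopologicalSpace X]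
    [TopologicalSpace Y] [NormedAddCommGroup E] {F : X → Y → E} {K : Set Y} (hK : IsCompact K)
    (hF : ContinuousOn (Function.uncurry F) (Set.univ ×ˢ K)) {x : X} (h0 : ∀ y ∈ K, F x y ≠ 0) :
    ∀ᶠ x' in 𝓝 x, ∀ y ∈ K, ‖F x' y - F x y‖ < ‖F x y‖ := by
  have hFx : ContinuousOn (F x) K :=
    hF.comp (f := Prod.mk x) (by fun_prop) fun y hy ↦ ⟨Set.mem_univ x, hy⟩
  obtain ⟨m, hm, hmF⟩ := hK.exists_forall_le' hFx.norm fun y hy ↦ norm_pos_iff.2 (h0 y hy)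
  obtain ⟨V, hV, hVF⟩ := hK.mem_uniformity_of_prod hF (Set.mem_univ x) (dist_mem_uniformity hm)
  rw [nhdsWithin_univ] at hV
  filter_upwards [hV] with x' hx' y hy
  rw [← dist_eq_norm]
  exact (hVF x' hx' y hy).trans_le (hmF y hy)

variable {X : Type*} [TopologicalSpace X] {F : X → ℂ → ℂ}

theorem isLocallyConstant_circleIntegral_logDeriv (hR : 0 ≤ R)
    (hcont : ContinuousOn (Function.uncurry F) (Set.univ ×ˢ sphere c R))
    (hF : ∀ x, AnalyticOnNhd ℂ (F x) (sphere c R)) (h0 : ∀ x, ∀ z ∈ sphere c R, F x z ≠ 0) :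
    IsLocallyConstant fun x ↦ ∮ z in C(c, R), logDeriv (F x) z := by
  refine (IsLocallyConstant.iff_eventually_eq _).2 fun x ↦ ?_
  filter_upwards [eventually_forall_norm_sub_lt_norm (isCompact_sphere c R) hcont (h0 x)] with y hy
  exact circleIntegral_logDeriv_eq_of_norm_sub_lt hR (hF y) (hF x) hy

theorem finsum_vanishOrder_eq_of_homotopy [PreconnectedSpace X] (hR : 0 < R)
    (hcont : ContinuousOn (Function.uncurry F) (Set.univ ×ˢ sphere c R))
    (hF : ∀ x, AnalyticOnNhd ℂ (F x) (closedBall c R)) (h0 : ∀ x, ∀ z ∈ sphere c R, F x z ≠ 0)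
    (x y : X) :
    ∑ᶠ z ∈ {z ∈ ball c R | F x z = 0}, vanishOrder (F x) z =
      ∑ᶠ z ∈ {z ∈ ball c R | F y z = 0}, vanishOrder (F y) z := by
  have hint := (isLocallyConstant_circleIntegral_logDeriv hR.le hcont
    (fun x ↦ (hF x).mono sphere_subset_closedBall) h0).apply_eq_of_preconnectedSpace x y
  simp only [circleIntegral_logDeriv_eq_finsum_vanishOrder hR (hF _) (h0 _)] at hint
  exact_mod_cast mul_left_cancel₀ Complex.two_pi_I_ne_zero hint

end Homotopy

/-- if `A, B` are analytic matrix-valued functions on an open `U ⊇ D̄`, `A` is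
invertible on `∂D` and `‖A⁻¹(B − A)‖_Q < 1` on `∂D` for some `Q ≻ 0` (depending on the
point), then `det∘A` and `det∘B` are zero-free on `∂D`, have finitely many zeros in `D`,
and have the same number of zeros in `D` counted with multiplicity. -/
theorem stmt7 {N : ℕ} (U : Set ℂ) (hU : IsOpen U)
    (A B : ℂ → Mat N)
    (hA : ∀ i j, AnalyticOn ℂ (fun z => A z i j) U)
    (hB : ∀ i j, AnalyticOn ℂ (fun z => B z i j) U)
    (z₀ : ℂ) (r : ℝ) (hr : 0 < r) (hDU : closedBall z₀ r ⊆ U)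
    (hbd : ∀ lam ∈ sphere z₀ r, IsUnit (A lam) ∧
      ∃ Q : Mat N, Q.PosDef ∧ opNormQ Q ((A lam)⁻¹ * (B lam - A lam)) < 1) :
    (∀ lam ∈ sphere z₀ r, det (A lam) ≠ 0 ∧ det (B lam) ≠ 0) ∧
    Set.Finite {z ∈ ball z₀ r | det (A z) = 0} ∧
    Set.Finite {z ∈ ball z₀ r | det (B z) = 0} ∧
    (∑ᶠ z ∈ {z ∈ ball z₀ r | det (A z) = 0}, vanishOrder (fun w => det (A w)) z)
      = ∑ᶠ z ∈ {z ∈ ball z₀ r | det (B z) = 0}, vanishOrder (fun w => det (B w)) z := by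
  let F : unitInterval → ℂ → ℂ := fun t z ↦ det (A z + (t : ℂ) • (B z - A z))
  have hjoint (t : ℂ) {z : ℂ} (hz : z ∈ closedBall z₀ r) :
      AnalyticAt ℂ (fun p : ℂ × ℂ ↦ det (A p.2 + p.1 • (B p.2 - A p.2))) (t, z) :=
    analyticAt_det_add_smul_sub
      (fun i j ↦ hU.analyticOn_iff_analyticOnNhd.1 (hA i j) z (hDU hz))
      (fun i j ↦ hU.analyticOn_iff_analyticOnNhd.1 (hB i j) z (hDU hz)) t
  have hF (t) : AnalyticOnNhd ℂ (F t) (closedBall z₀ r) := fun z hz ↦ (hjoint t hz).along_snd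
  have hcont : ContinuousOn (Function.uncurry F) (Set.univ ×ˢ sphere z₀ r) := fun p hp ↦
    ((hjoint p.1 (sphere_subset_closedBall hp.2)).continuousAt.comp
      (f := Prod.map (fun t : unitInterval ↦ (t : ℂ)) id) (by fun_prop)).continuousWithinAt
  have h0 (t) : ∀ z ∈ sphere z₀ r, F t z ≠ 0 := fun z hz ↦ by
    obtain ⟨hAz, Q, hQ, hlt⟩ := hbd z hz
    exact det_add_smul_sub_ne_zero hAz hQ hlt ((Complex.norm_of_nonneg t.2.1).trans_le t.2.2)
  have hfin (t) := finite_zeros_ball hr.le (hF t) (h0 t)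
  have hcount := finsum_vanishOrder_eq_of_homotopy hr hcont hF h0 0 1
  have hF0 : F 0 = fun z ↦ det (A z) := by simp [F]
  have hF1 : F 1 = fun z ↦ det (B z) := by simp [F]
  rw [hF0, hF1] at hcount
  exact ⟨fun z hz ↦ ⟨by simpa only [hF0] using h0 0 z hz, by simpa only [hF1] using h0 1 z hz⟩,
    by simpa only [hF0] using hfin 0, by simpa only [hF1] using hfin 1, hcount⟩

end
end

section
/- Let N ≥ 2 and, for each M, let Ĉ_M ∈ M_N be the block matrix with upper-left (N−1)×(N−1) block Â_M, upper-right column b_M ∈ ℂ^{N−1}, lower-left row c_M* (c_M ∈ ℂ^{N−1}), and lower-right scalar ε_M. Suppose Â_M → A with A invertible, b_M → 0, c_M → 0, ε_M → 0, and that the Schur complement ε'_M := ε_M − c_M* Â_M⁻¹ b_M is nonzero for every M. Then each Ĉ_M is invertible and ε'_M · Ĉ_M⁻¹ converges, as M → ∞, to the matrix E ∈ M_N whose (N,N) entry is 1 and all other entries are 0. -/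
open Matrix Filter Topology

noncomputable section

/-!
Since `det Ĉ_M = det Â_M * ε'_M`, Cramer's rule gives `ε'_M • Ĉ_M⁻¹ = (det Â_M)⁻¹ • adj Ĉ_M`, and
the inverse of the degenerating matrix `Ĉ_M` has disappeared from the right-hand side. That side is
continuous in the blocks as long as `det Â_M` stays away from `0`, and the adjugate of the limit
`[[A, 0], [0, 0]]` has `det A` in the lower right corner and zeros elsewhere.
-/

section SchurComplement

variable {m n R : Type*} [Fintype m] [DecidableEq m] [Fintype n] [DecidableEq n] [CommRing R]
  {A : Matrix m m R}

theorem det_fromBlocks_eq_det_mul_det_schur (hA : IsUnit A) (B : Matrix m n R) (C : Matrix n m R)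
    (D : Matrix n n R) : (fromBlocks A B C D).det = A.det * (D - C * A⁻¹ * B).det := by
  let := hA.invertible
  rw [det_fromBlocks₁₁, invOf_eq_nonsing_inv]

theorem isUnit_fromBlocks_of_isUnit_schur {B : Matrix m n R} {C : Matrix n m R} {D : Matrix n n R}
    (hA : IsUnit A) (hS : IsUnit (D - C * A⁻¹ * B)) : IsUnit (fromBlocks A B C D) := by
  let := hA.invertible
  rwa [isUnit_fromBlocks_iff_of_invertible₁₁, invOf_eq_nonsing_inv]

theorem det_smul_inv_eq_adjugate (hA : IsUnit A) : A.det • A⁻¹ = A.adjugate := by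
  rw [inv_def, smul_smul, Ring.mul_inverse_cancel _ ((isUnit_iff_isUnit_det A).1 hA), one_smul]

theorem det_smul_det_schur_smul_inv_fromBlocks {B : Matrix m n R} {C : Matrix n m R}
    {D : Matrix n n R} (hA : IsUnit A) (hS : IsUnit (D - C * A⁻¹ * B)) :
    A.det • (D - C * A⁻¹ * B).det • (fromBlocks A B C D)⁻¹ = (fromBlocks A B C D).adjugate := by
  rw [smul_smul, ← det_fromBlocks_eq_det_mul_det_schur hA,
    det_smul_inv_eq_adjugate (isUnit_fromBlocks_of_isUnit_schur hA hS)]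

end SchurComplement

section BlockLimits

theorem tendsto_fromBlocks {ι m n p q X : Type*} [TopologicalSpace X] {l : Filter ι}
    {A : ι → Matrix m p X} {B : ι → Matrix m q X} {C : ι → Matrix n p X} {D : ι → Matrix n q X}
    {A₀ : Matrix m p X} {B₀ : Matrix m q X} {C₀ : Matrix n p X} {D₀ : Matrix n q X}
    (hA : Tendsto A l (𝓝 A₀)) (hB : Tendsto B l (𝓝 B₀)) (hC : Tendsto C l (𝓝 C₀))
    (hD : Tendsto D l (𝓝 D₀)) :
    Tendsto (fun i => fromBlocks (A i) (B i) (C i) (D i)) l (𝓝 (fromBlocks A₀ B₀ C₀ D₀)) := by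
  have hcont : Continuous fun x : Matrix m p X × Matrix m q X × Matrix n p X × Matrix n q X =>
      fromBlocks x.1 x.2.1 x.2.2.1 x.2.2.2 := by
    apply Continuous.matrix_fromBlocks <;> fun_prop
  exact (hcont.tendsto (A₀, B₀, C₀, D₀)).comp
    (hA.prodMk_nhds (hB.prodMk_nhds (hC.prodMk_nhds hD)))

theorem tendsto_det_schur_smul_inv_fromBlocks {ι m n 𝕜 : Type*} [Fintype m] [DecidableEq m]
    [Fintype n] [DecidableEq n] [Field 𝕜] [TopologicalSpace 𝕜] [IsTopologicalDivisionRing 𝕜]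
    {l : Filter ι} {A : ι → Matrix m m 𝕜} {B : ι → Matrix m n 𝕜} {C : ι → Matrix n m 𝕜}
    {D : ι → Matrix n n 𝕜} {A₀ : Matrix m m 𝕜} {B₀ : Matrix m n 𝕜} {C₀ : Matrix n m 𝕜}
    {D₀ : Matrix n n 𝕜} (hA₀ : IsUnit A₀) (hAunit : ∀ i, IsUnit (A i))
    (hA : Tendsto A l (𝓝 A₀)) (hB : Tendsto B l (𝓝 B₀)) (hC : Tendsto C l (𝓝 C₀))
    (hD : Tendsto D l (𝓝 D₀)) (hS : ∀ i, IsUnit (D i - C i * (A i)⁻¹ * B i)) :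
    Tendsto (fun i => (D i - C i * (A i)⁻¹ * B i).det • (fromBlocks (A i) (B i) (C i) (D i))⁻¹) l
      (𝓝 (A₀.det⁻¹ • (fromBlocks A₀ B₀ C₀ D₀).adjugate)) := by
  have det_ne_zero {X : Matrix m m 𝕜} (hX : IsUnit X) : X.det ≠ 0 :=
    ((isUnit_iff_isUnit_det X).1 hX).ne_zero
  have hdet : Tendsto (fun i => (A i).det) l (𝓝 A₀.det) :=
    (continuous_id.matrix_det.tendsto A₀).comp hA
  have hadj : Tendsto (fun i => (fromBlocks (A i) (B i) (C i) (D i)).adjugate) l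
      (𝓝 (fromBlocks A₀ B₀ C₀ D₀).adjugate) :=
    (continuous_id.matrix_adjugate.tendsto _).comp (tendsto_fromBlocks hA hB hC hD)
  refine ((hdet.inv₀ (det_ne_zero hA₀)).smul hadj).congr fun i => ?_
  rw [← det_smul_det_schur_smul_inv_fromBlocks (hAunit i) (hS i),
    inv_smul_smul₀ (det_ne_zero (hAunit i))]

end BlockLimits

section BorderedMatrix

variable {m R : Type*}

/-- The bordered matrix `[[A, b], [c, d]]`, in which `A` is extended by one column `b`, one row `c`
and a corner entry `d`. The new index is `Sum.inr ()`, and `c` enters without conjugation. -/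
def borderedMatrix (A : Matrix m m R) (b c : m → R) (d : R) : Matrix (m ⊕ Unit) (m ⊕ Unit) R :=
  fromBlocks A (replicateCol Unit b) (replicateRow Unit c) (of fun _ _ => d)

variable [Fintype m] [DecidableEq m]

theorem schur_borderedMatrix [CommRing R] (A : Matrix m m R) (b c : m → R) (d : R) :
    (of fun _ _ => d) - replicateRow Unit c * A⁻¹ * replicateCol Unit b =
      of fun _ _ => d - c ⬝ᵥ A⁻¹ *ᵥ b := by
  rw [Matrix.mul_assoc, ← replicateCol_mulVec, replicateRow_mul_replicateCol]
  rfl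

theorem adjugate_borderedMatrix_zero [CommRing R] (A : Matrix m m R) :
    (borderedMatrix A 0 0 0).adjugate = A.det • borderedMatrix 0 0 0 1 := by
  -- Away from the corner, the matrix whose determinant is the cofactor keeps a zero row or column.
  ext (i | i) (j | j)
  · simpa [adjugate_apply, borderedMatrix] using
      det_eq_zero_of_row_eq_zero (Sum.inr ()) (by simp [updateRow_apply])
  · simpa [adjugate_apply, borderedMatrix] using
      det_eq_zero_of_column_eq_zero (Sum.inr ()) (by simp [updateRow_apply])
  · simpa [adjugate_apply, borderedMatrix] using
      det_eq_zero_of_row_eq_zero (Sum.inr ()) (by simp [updateRow_apply])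
  · have updateRow_eq : (borderedMatrix A 0 0 0).updateRow (Sum.inr j) (Pi.single (Sum.inr i) 1) =
        fromBlocks A 0 0 1 := by
      ext (k | k) (l | l) <;> simp [updateRow_apply, borderedMatrix]
    rw [adjugate_apply, updateRow_eq, det_fromBlocks_zero₂₁]
    simp [borderedMatrix]

theorem inv_det_smul_adjugate_borderedMatrix_zero [Field R] {A : Matrix m m R} (hA : IsUnit A) :
    A.det⁻¹ • (borderedMatrix A 0 0 0).adjugate = borderedMatrix 0 0 0 1 := by
  rw [adjugate_borderedMatrix_zero, inv_smul_smul₀ ((isUnit_iff_isUnit_det A).1 hA).ne_zero]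

end BorderedMatrix

theorem stmt11_general {ι m 𝕜 : Type*} [Fintype m] [DecidableEq m] [Field 𝕜] [TopologicalSpace 𝕜]
    [IsTopologicalDivisionRing 𝕜] {l : Filter ι} {A : ι → Matrix m m 𝕜} {b c : ι → m → 𝕜}
    {d : ι → 𝕜} {A₀ : Matrix m m 𝕜} {b₀ c₀ : m → 𝕜} {d₀ : 𝕜} (hA₀ : IsUnit A₀)
    (hAunit : ∀ i, IsUnit (A i)) (hA : Tendsto A l (𝓝 A₀)) (hb : Tendsto b l (𝓝 b₀))
    (hc : Tendsto c l (𝓝 c₀)) (hd : Tendsto d l (𝓝 d₀))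
    (hschur : ∀ i, d i - c i ⬝ᵥ (A i)⁻¹ *ᵥ b i ≠ 0) :
    (∀ i, IsUnit (borderedMatrix (A i) (b i) (c i) (d i))) ∧
    Tendsto (fun i => (d i - c i ⬝ᵥ (A i)⁻¹ *ᵥ b i) •
        (borderedMatrix (A i) (b i) (c i) (d i))⁻¹) l
      (𝓝 (A₀.det⁻¹ • (borderedMatrix A₀ b₀ c₀ d₀).adjugate)) := by
  have hcol : Tendsto (fun i => replicateCol Unit (b i)) l (𝓝 (replicateCol Unit b₀)) :=
    (continuous_id.matrix_replicateCol.tendsto b₀).comp hb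
  have hrow : Tendsto (fun i => replicateRow Unit (c i)) l (𝓝 (replicateRow Unit c₀)) :=
    (continuous_id.matrix_replicateRow.tendsto c₀).comp hc
  have hcorner : Tendsto (fun i => (of fun _ _ => d i : Matrix Unit Unit 𝕜)) l
      (𝓝 (of fun _ _ => d₀)) :=
    tendsto_pi_nhds.2 fun _ => tendsto_pi_nhds.2 fun _ => hd
  have hS (i : ι) : IsUnit ((of fun _ _ => d i) -
      replicateRow Unit (c i) * (A i)⁻¹ * replicateCol Unit (b i)) := by
    simpa [schur_borderedMatrix, isUnit_iff_isUnit_det] using hschur i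
  refine ⟨fun i => isUnit_fromBlocks_of_isUnit_schur (hAunit i) (hS i), ?_⟩
  simpa [schur_borderedMatrix, borderedMatrix] using
    tendsto_det_schur_smul_inv_fromBlocks hA₀ hAunit hA hcol hrow hcorner hS

/-- if `Ĉ_M = [[Â_M, b_M], [c_M*, ε_M]]` with `Â_M → A` invertible,
`b_M, c_M, ε_M → 0`, each `Â_M` invertible, and the Schur complements
`ε'_M = ε_M − c_M* Â_M⁻¹ b_M` nonzero, then each `Ĉ_M` is invertible and
`ε'_M · Ĉ_M⁻¹` converges to the matrix with a single `1` in the lower-right corner.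
(The `N×N` matrices, `N = n+1 ≥ 2`, are indexed by `Fin n ⊕ Unit`.) -/
theorem stmt11 {n : ℕ} (hn : 1 ≤ n)
    (A : Matrix (Fin n) (Fin n) ℂ) (hA : IsUnit A)
    (AM : ℕ → Matrix (Fin n) (Fin n) ℂ) (hAMinv : ∀ M, IsUnit (AM M))
    (bM cM : ℕ → Fin n → ℂ) (εM : ℕ → ℂ)
    (hAconv : Tendsto AM atTop (𝓝 A))
    (hbconv : Tendsto bM atTop (𝓝 0))
    (hcconv : Tendsto cM atTop (𝓝 0))
    (hεconv : Tendsto εM atTop (𝓝 0))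
    (hschur : ∀ M, εM M - star (cM M) ⬝ᵥ (AM M)⁻¹ *ᵥ bM M ≠ 0) :
    (∀ M, IsUnit (Matrix.fromBlocks (AM M) (fun i (_ : Unit) => bM M i)
        (fun (_ : Unit) j => star (cM M j)) (fun _ _ => εM M))) ∧
    Tendsto (fun M => (εM M - star (cM M) ⬝ᵥ (AM M)⁻¹ *ᵥ bM M) •
        (Matrix.fromBlocks (AM M) (fun i (_ : Unit) => bM M i)
          (fun (_ : Unit) j => star (cM M j)) (fun _ _ => εM M))⁻¹)
      atTop
      (𝓝 (Matrix.fromBlocks (0 : Matrix (Fin n) (Fin n) ℂ) 0 0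
            (fun (_ : Unit) (_ : Unit) => (1 : ℂ)))) := by
  have h := stmt11_general hA hAMinv hAconv hbconv (by simpa using hcconv.star) hεconv hschur
  rwa [inv_det_smul_adjugate_borderedMatrix_zero hA] at h

end
end
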